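/- arXiv:2402.00417 — 3 statements merged into one kernel-verified Lean document; each statement's English description precedes it below -/
import Mathlib

section
/- Let M be a monoid and d, b ∈ M with d·d = 1 and b·b = b, and let k0, k1, r > 0. Then: (1) for each i ∈ {01, 10, 11}, eqᵢ•(k0) ∧ ((d·b)^(k1) = (d·b)^(k1+2r)) holds if and only if eqᵢ•(min(k0, k1)) holds; (2) for each i ∈ {01, 10, 11}, ((d·b)^(k0) = (d·b)^(k0+2r+1)) ∧ eqᵢ°(k1) holds if and only if eqᵢ•(min(k0, k1)) holds; (3) for all distinct i, j ∈ {01, 10, 11}, eqᵢ°(k0) ∧ eqⱼ•(k1) holds if and only if eq11•(min(k0, k1)) holds. -/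
/-! Put `c = d * b`, so that `c * d * c = c`, and rewrite every equation in terms of `c` and `d`.
A power of `c` lying on a cycle has all the periods that occur further along, hence also the gcd of
any two of them. An equation of type `°` gives the powers of `c` period 2 and one of type `•` gives
them period 1, so each side of each claimed equivalence forces `c ^ k₀` and `c ^ k₁` to be fixed by
`c`. Powers fixed by `c` coincide, and the equivalences become statements about the single element
`c ^ k₀ = c ^ k₁`. -/

open Function

/-- The equation `eq00(k, l)`: from exponent `k` on, the powers of `c` repeat with period `l`. -/
def PowPeriodic {M : Type*} [Monoid M] (c : M) (l k : ℕ) : Prop :=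
  c ^ k = c ^ (k + l)

/-- The side on which `d` multiplies a power of `c`: `right`, `left` and `both` stand for the
indices `01`, `10` and `11` of the equations `°` and `•`. -/
inductive Side
  | right
  | left
  | both

/-- The equations `eqᵢ°(k)` in terms of `c = d * b` and the involution `d`; these are the ones
whose two sides agree when `c = d`, that is, when `b = 1`. -/
def EqCirc {M : Type*} [Monoid M] (c d : M) : Side → ℕ → Prop
  | .right, k => c ^ k = c ^ (k + 1) * d
  | .left, k => c ^ k = d * c ^ (k + 1)
  | .both, k => c ^ k = d * c ^ k * d

/-- The equations `eqᵢ•(k)` in terms of `c = d * b` and the involution `d`, for `0 < k`; for `c = d`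
each of them says `d = 1`. -/
def EqBullet {M : Type*} [Monoid M] (c d : M) : Side → ℕ → Prop
  | .right, k => c ^ k = c ^ k * d
  | .left, k => c ^ k = d * c ^ k
  | .both, k => c ^ k = d * c ^ (k + 1) * d

section

variable {M : Type*} [Monoid M] {b c d : M} {i j : Side} {k l m n : ℕ}

lemma powPeriodic_iff_isPeriodicPt : PowPeriodic c l k ↔ IsPeriodicPt (c * ·) l (c ^ k) := by
  rw [PowPeriodic, IsPeriodicPt, IsFixedPt, mul_left_iterate_apply, ← pow_add, add_comm l, eq_comm]

namespace PowPeriodic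

lemma mono (h : PowPeriodic c l k) (hkm : k ≤ m) : PowPeriodic c l m := by
  obtain ⟨n, rfl⟩ := Nat.exists_eq_add_of_le' hkm
  rw [PowPeriodic, add_assoc, pow_add, h, ← pow_add]

lemma trans_dvd (h : PowPeriodic c l k) (hlm : l ∣ m) : PowPeriodic c m k :=
  powPeriodic_iff_isPeriodicPt.2 ((powPeriodic_iff_isPeriodicPt.1 h).trans_dvd hlm)

lemma transfer_period (hl : 0 < l) (hk : PowPeriodic c l k) (hn : PowPeriodic c m n) :
    PowPeriodic c m k := by
  have hmem : c ^ k ∈ periodicPts (c * ·) :=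
    mk_mem_periodicPts hl (powPeriodic_iff_isPeriodicPt.1 hk)
  have hnk := powPeriodic_iff_isPeriodicPt.1 (hn.mono (n.le_add_right k))
  rw [pow_add, ← mul_left_iterate_apply] at hnk
  exact powPeriodic_iff_isPeriodicPt.2
    (isPeriodicPt_of_mem_periodicPts_of_isPeriodicPt_iterate hmem hnk)

lemma gcd (hl : 0 < l) (hk : PowPeriodic c l k) (hn : PowPeriodic c m n) :
    PowPeriodic c (l.gcd m) k :=
  powPeriodic_iff_isPeriodicPt.2 <| (powPeriodic_iff_isPeriodicPt.1 hk).gcd <|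
    powPeriodic_iff_isPeriodicPt.1 (hk.transfer_period hl hn)

lemma pow_eq_pow (hk : PowPeriodic c 1 k) (hm : PowPeriodic c 1 m) : c ^ k = c ^ m :=
  calc
    c ^ k = c ^ (k + m) := hk.trans_dvd (one_dvd m)
    _ = c ^ (m + k) := by rw [add_comm]
    _ = c ^ m := (hm.trans_dvd (one_dvd k)).symm

lemma eqBullet_iff (hk : PowPeriodic c 1 k) (hm : PowPeriodic c 1 m) :
    EqBullet c d i k ↔ EqBullet c d i m := by
  have hsucc : c ^ (k + 1) = c ^ (m + 1) :=
    (hk.mono k.le_succ).pow_eq_pow (hm.mono m.le_succ)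
  cases i <;> simp only [EqBullet, hk.pow_eq_pow hm, hsucc]

lemma eqCirc_iff_eqBullet (h : PowPeriodic c 1 k) : EqCirc c d i k ↔ EqBullet c d i k := by
  have hsucc : c ^ (k + 1) = c ^ k := h.symm
  cases i <;> simp only [EqCirc, EqBullet, hsucc]

end PowPeriodic

lemma pow_mul_mul_self (hc : c * d * c = c) (hk : 0 < k) : c ^ k * d * c = c ^ k := by
  obtain ⟨n, rfl⟩ := Nat.exists_eq_succ_of_ne_zero hk.ne'
  rw [pow_succ, mul_assoc, mul_assoc, ← mul_assoc c, hc]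

lemma self_mul_mul_pow (hc : c * d * c = c) (hk : 0 < k) : c * d * c ^ k = c ^ k := by
  obtain ⟨n, rfl⟩ := Nat.exists_eq_succ_of_ne_zero hk.ne'
  rw [pow_succ', ← mul_assoc, hc]

lemma pow_succ_eq_pow_mul_of_eq_conj (hc : c * d * c = c) (hm : 0 < m)
    (h : c ^ k = d * c ^ m * d) : c ^ (k + 1) = c ^ m * d := by
  rw [pow_succ', h, ← mul_assoc, ← mul_assoc, self_mul_mul_pow hc hm]

lemma pow_succ_eq_mul_pow_of_eq_conj (hc : c * d * c = c) (hm : 0 < m)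
    (h : c ^ k = d * c ^ m * d) : c ^ (k + 1) = d * c ^ m := by
  rw [pow_succ, h, mul_assoc, mul_assoc, ← mul_assoc (c ^ m), pow_mul_mul_self hc hm]

lemma EqBullet.powPeriodic_one (hc : c * d * c = c) (hk : 0 < k) (h : EqBullet c d i k) :
    PowPeriodic c 1 k := by
  cases i with
  | right =>
    calc
      c ^ k = c ^ k * d * c := (pow_mul_mul_self hc hk).symm
      _ = c ^ (k + 1) := by rw [← h, pow_succ]
  | left =>
    calc
      c ^ k = c * (d * c ^ k) := by rw [← mul_assoc, self_mul_mul_pow hc hk]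
      _ = c ^ (k + 1) := by rw [← h, pow_succ']
  | both =>
    calc
      c ^ k = d * c ^ (k + 1) * d := h
      _ = c ^ (k + 1) * d := by rw [← pow_succ_eq_mul_pow_of_eq_conj hc k.succ_pos h]
      _ = c ^ (k + 1) := (pow_succ_eq_pow_mul_of_eq_conj hc k.succ_pos h).symm

lemma EqCirc.powPeriodic_two (hc : c * d * c = c) (hd : d * d = 1) (hk : 0 < k)
    (h : EqCirc c d i k) : PowPeriodic c 2 k := by
  have two_of_right (hright : c ^ k = c ^ (k + 1) * d) : PowPeriodic c 2 k := by
    have hsucc : c ^ k * d = c ^ (k + 1) := by rw [hright, mul_assoc, hd, mul_one]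
    rw [PowPeriodic, hright, pow_succ', mul_assoc, hsucc, ← pow_succ']
  cases i with
  | right => exact two_of_right h
  | left =>
    have hsucc : d * c ^ k = c ^ (k + 1) := by rw [h, ← mul_assoc, hd, one_mul]
    rw [PowPeriodic, h, pow_succ, ← mul_assoc, hsucc, ← pow_succ]
  | both =>
    apply two_of_right
    rw [pow_succ_eq_pow_mul_of_eq_conj hc hk h, mul_assoc, hd, mul_one]

lemma EqBullet.of_both (hc : c * d * c = c) (hk : 0 < k) (h : EqBullet c d .both k) :
    EqBullet c d i k := by
  have hsucc : c ^ k = c ^ (k + 1) := h.powPeriodic_one hc hk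
  cases i with
  | right =>
    rw [EqBullet, hsucc]
    exact pow_succ_eq_pow_mul_of_eq_conj hc k.succ_pos h
  | left =>
    rw [EqBullet, hsucc]
    exact pow_succ_eq_mul_pow_of_eq_conj hc k.succ_pos h
  | both => exact h

lemma EqBullet.both_of_right_of_left (hc : c * d * c = c) (hk : 0 < k)
    (hright : EqBullet c d .right k) (hleft : EqBullet c d .left k) : EqBullet c d .both k :=
  calc
    c ^ k = d * c ^ k := hleft
    _ = d * c ^ k * d := by rw [mul_assoc, ← hright]
    _ = d * c ^ (k + 1) * d := by rw [← hright.powPeriodic_one hc hk]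

lemma eqBullet_both_iff_of_ne (hc : c * d * c = c) (hk : 0 < k) (hij : i ≠ j) :
    EqBullet c d .both k ↔ EqBullet c d i k ∧ EqBullet c d j k := by
  refine ⟨fun h ↦ ⟨h.of_both hc hk, h.of_both hc hk⟩, fun ⟨hi, hj⟩ ↦ ?_⟩
  cases i <;> cases j
  case right.left => exact hi.both_of_right_of_left hc hk hj
  case left.right => exact hj.both_of_right_of_left hc hk hi
  all_goals first | assumption | contradiction

lemma eqBullet_min_iff (hc : c * d * c = c) (hk : 0 < k) (hm : 0 < m) :
    EqBullet c d i (min k m) ↔ PowPeriodic c 1 k ∧ PowPeriodic c 1 m ∧ EqBullet c d i k := by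
  constructor
  · intro h
    have hmin := h.powPeriodic_one hc (lt_min hk hm)
    have hk1 := hmin.mono (min_le_left k m)
    exact ⟨hk1, hmin.mono (min_le_right k m), (hmin.eqBullet_iff hk1).1 h⟩
  · rintro ⟨hk1, hm1, h⟩
    exact ((min_rec' (PowPeriodic c 1) hk1 hm1).eqBullet_iff hk1).2 h

theorem eqBullet_and_powPeriodic_iff (hc : c * d * c = c) (hk : 0 < k) (hm : 0 < m) (hl : 0 < l) :
    EqBullet c d i k ∧ PowPeriodic c l m ↔ EqBullet c d i (min k m) := by
  rw [eqBullet_min_iff hc hk hm]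
  constructor
  · rintro ⟨hbullet, hper⟩
    have hk1 := hbullet.powPeriodic_one hc hk
    exact ⟨hk1, hper.transfer_period hl hk1, hbullet⟩
  · rintro ⟨-, hm1, hbullet⟩
    exact ⟨hbullet, hm1.trans_dvd (one_dvd l)⟩

theorem powPeriodic_and_eqCirc_iff (hc : c * d * c = c) (hd : d * d = 1) (hk : 0 < k)
    (hm : 0 < m) (hl : Odd l) :
    PowPeriodic c l k ∧ EqCirc c d i m ↔ EqBullet c d i (min k m) := by
  rw [eqBullet_min_iff hc hk hm]
  constructor
  · rintro ⟨hper, hcirc⟩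
    have hm2 := hcirc.powPeriodic_two hc hd hm
    have hk1 : PowPeriodic c 1 k := hl.coprime_two_right.gcd_eq_one ▸ hper.gcd hl.pos hm2
    have hm1 := hm2.transfer_period two_pos hk1
    exact ⟨hk1, hm1, (hk1.eqBullet_iff hm1).2 (hm1.eqCirc_iff_eqBullet.1 hcirc)⟩
  · rintro ⟨hk1, hm1, hbullet⟩
    exact ⟨hk1.trans_dvd (one_dvd l),
      hm1.eqCirc_iff_eqBullet.2 ((hk1.eqBullet_iff hm1).1 hbullet)⟩

theorem eqCirc_and_eqBullet_iff (hc : c * d * c = c) (hd : d * d = 1) (hk : 0 < k) (hm : 0 < m)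
    (hij : i ≠ j) :
    EqCirc c d i k ∧ EqBullet c d j m ↔ EqBullet c d .both (min k m) := by
  rw [eqBullet_min_iff hc hk hm, eqBullet_both_iff_of_ne hc hk hij]
  constructor
  · rintro ⟨hcirc, hbullet⟩
    have hm1 := hbullet.powPeriodic_one hc hm
    have hk1 := (hcirc.powPeriodic_two hc hd hk).transfer_period two_pos hm1
    exact ⟨hk1, hm1, hk1.eqCirc_iff_eqBullet.1 hcirc, (hk1.eqBullet_iff hm1).2 hbullet⟩
  · rintro ⟨hk1, hm1, hi, hj⟩
    exact ⟨hk1.eqCirc_iff_eqBullet.2 hi, (hk1.eqBullet_iff hm1).1 hj⟩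

lemma mul_pow_eq_conj (hd : d * d = 1) (k : ℕ) : (b * d) ^ k = d * (d * b) ^ k * d := by
  rw [mul_assoc, mul_pow_mul, ← mul_assoc, hd, one_mul]

lemma mul_pow_mul_eq_mul_pow_succ (hd : d * d = 1) (k : ℕ) :
    (b * d) ^ k * b = d * (d * b) ^ (k + 1) := by
  simp only [mul_pow_eq_conj hd, pow_succ, mul_assoc]

lemma mul_pow_pred_mul_eq_mul_pow (hd : d * d = 1) (hk : 0 < k) :
    (b * d) ^ (k - 1) * b = d * (d * b) ^ k := by
  rw [mul_pow_mul_eq_mul_pow_succ hd, Nat.sub_add_cancel hk]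

end

theorem stmt_12 {M : Type*} [Monoid M] (d b : M) (hd : d * d = 1) (hb : b * b = b)
    (k0 k1 r : ℕ) (hk0 : 0 < k0) (hk1 : 0 < k1) (hr : 0 < r) :
    -- (1) eqᵢ•(k0) ∧ eq00(k1, 2r) ↔ eqᵢ•(min k0 k1), for i ∈ {01, 10, 11}
    (((d * b) ^ k0 = (d * b) ^ k0 * d ∧ (d * b) ^ k1 = (d * b) ^ (k1 + 2 * r)) ↔
      (d * b) ^ min k0 k1 = (d * b) ^ min k0 k1 * d) ∧
    (((d * b) ^ k0 = (b * d) ^ (k0 - 1) * b ∧ (d * b) ^ k1 = (d * b) ^ (k1 + 2 * r)) ↔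
      (d * b) ^ min k0 k1 = (b * d) ^ (min k0 k1 - 1) * b) ∧
    (((d * b) ^ k0 = (b * d) ^ (k0 + 1) ∧ (d * b) ^ k1 = (d * b) ^ (k1 + 2 * r)) ↔
      (d * b) ^ min k0 k1 = (b * d) ^ (min k0 k1 + 1)) ∧
    -- (2) eq00(k0, 2r+1) ∧ eqᵢ°(k1) ↔ eqᵢ•(min k0 k1), for i ∈ {01, 10, 11}
    (((d * b) ^ k0 = (d * b) ^ (k0 + (2 * r + 1)) ∧ (d * b) ^ k1 = (d * b) ^ (k1 + 1) * d) ↔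
      (d * b) ^ min k0 k1 = (d * b) ^ min k0 k1 * d) ∧
    (((d * b) ^ k0 = (d * b) ^ (k0 + (2 * r + 1)) ∧ (d * b) ^ k1 = (b * d) ^ k1 * b) ↔
      (d * b) ^ min k0 k1 = (b * d) ^ (min k0 k1 - 1) * b) ∧
    (((d * b) ^ k0 = (d * b) ^ (k0 + (2 * r + 1)) ∧ (d * b) ^ k1 = (b * d) ^ k1) ↔
      (d * b) ^ min k0 k1 = (b * d) ^ (min k0 k1 + 1)) ∧
    -- (3) eqᵢ°(k0) ∧ eqⱼ•(k1) ↔ eq11•(min k0 k1), for distinct i, j ∈ {01, 10, 11}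
    (((d * b) ^ k0 = (d * b) ^ (k0 + 1) * d ∧ (d * b) ^ k1 = (b * d) ^ (k1 - 1) * b) ↔
      (d * b) ^ min k0 k1 = (b * d) ^ (min k0 k1 + 1)) ∧
    (((d * b) ^ k0 = (d * b) ^ (k0 + 1) * d ∧ (d * b) ^ k1 = (b * d) ^ (k1 + 1)) ↔
      (d * b) ^ min k0 k1 = (b * d) ^ (min k0 k1 + 1)) ∧
    (((d * b) ^ k0 = (b * d) ^ k0 * b ∧ (d * b) ^ k1 = (d * b) ^ k1 * d) ↔
      (d * b) ^ min k0 k1 = (b * d) ^ (min k0 k1 + 1)) ∧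
    (((d * b) ^ k0 = (b * d) ^ k0 * b ∧ (d * b) ^ k1 = (b * d) ^ (k1 + 1)) ↔
      (d * b) ^ min k0 k1 = (b * d) ^ (min k0 k1 + 1)) ∧
    (((d * b) ^ k0 = (b * d) ^ k0 ∧ (d * b) ^ k1 = (d * b) ^ k1 * d) ↔
      (d * b) ^ min k0 k1 = (b * d) ^ (min k0 k1 + 1)) ∧
    (((d * b) ^ k0 = (b * d) ^ k0 ∧ (d * b) ^ k1 = (b * d) ^ (k1 - 1) * b) ↔
      (d * b) ^ min k0 k1 = (b * d) ^ (min k0 k1 + 1)) := by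
  have hc : d * b * d * (d * b) = d * b := by
    rw [mul_assoc, ← mul_assoc d d, hd, one_mul, mul_assoc, hb]
  have h2r : 0 < 2 * r := Nat.mul_pos two_pos hr
  have hodd : Odd (2 * r + 1) := odd_two_mul_add_one r
  rw [mul_pow_pred_mul_eq_mul_pow hd hk0, mul_pow_pred_mul_eq_mul_pow hd hk1,
    mul_pow_pred_mul_eq_mul_pow hd (lt_min hk0 hk1)]
  simp only [mul_pow_mul_eq_mul_pow_succ hd]
  simp only [mul_pow_eq_conj hd]
  exact ⟨eqBullet_and_powPeriodic_iff (i := .right) hc hk0 hk1 h2r,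
    eqBullet_and_powPeriodic_iff (i := .left) hc hk0 hk1 h2r,
    eqBullet_and_powPeriodic_iff (i := .both) hc hk0 hk1 h2r,
    powPeriodic_and_eqCirc_iff (i := .right) hc hd hk0 hk1 hodd,
    powPeriodic_and_eqCirc_iff (i := .left) hc hd hk0 hk1 hodd,
    powPeriodic_and_eqCirc_iff (i := .both) hc hd hk0 hk1 hodd,
    eqCirc_and_eqBullet_iff (i := .right) (j := .left) hc hd hk0 hk1 nofun,
    eqCirc_and_eqBullet_iff (i := .right) (j := .both) hc hd hk0 hk1 nofun,
    eqCirc_and_eqBullet_iff (i := .left) (j := .right) hc hd hk0 hk1 nofun,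
    eqCirc_and_eqBullet_iff (i := .left) (j := .both) hc hd hk0 hk1 nofun,
    eqCirc_and_eqBullet_iff (i := .both) (j := .right) hc hd hk0 hk1 nofun,
    eqCirc_and_eqBullet_iff (i := .both) (j := .left) hc hd hk0 hk1 nofun⟩
end

section
/- Let F be the free monoid on two generators d and b, and let G be the set of pairs of words of the form (b^{d0}·(d·b)^{k0}·d^{f0}, b^{d1}·(d·b)^{k1}·d^{f1}) with d0, f0, d1, f1 ∈ {0, 1} and k0, k1 ∈ ℕ. For every finite subset S ⊆ G there exists a subset S' ⊆ G with at most one element such that the congruence on F generated by {(d·d, 1), (b·b, b)} ∪ S equals the congruence generated by {(d·d, 1), (b·b, b)} ∪ S'. In other words, every strict 2-PIM has a presentation with at most three defining equations, namely d² = 1, b² = b, and possibly one further equation of the generic form. -/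
/-- The free monoid on the two generators `d` (the involution) and `b` (the idempotent). -/
abbrev F2 : Type := FreeMonoid Bool

/-- The generator `d`. -/
def dF : F2 := FreeMonoid.of true

/-- The generator `b`. -/
def bF : F2 := FreeMonoid.of false

/-- The congruence on the free monoid generated by `d·d ~ 1`, `b·b ~ b`
and the extra relations in `R`. -/
def presCon (R : Set (F2 × F2)) : Con F2 :=
  conGen (fun x y => (x, y) ∈ insert (dF * dF, (1 : F2)) (insert (bF * bF, bF) R))

/-- The set of pairs of words of the generic form
`b^{d0}·(d·b)^{k0}·d^{f0} = b^{d1}·(d·b)^{k1}·d^{f1}` with `d0, f0, d1, f1 ∈ {0, 1}`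
and `k0, k1 ∈ ℕ`. -/
def genericEqs : Set (F2 × F2) :=
  {p | ∃ d0 f0 d1 f1 k0 k1 : ℕ, d0 ≤ 1 ∧ f0 ≤ 1 ∧ d1 ≤ 1 ∧ f1 ≤ 1 ∧
    p = (bF ^ d0 * (dF * bF) ^ k0 * dF ^ f0, bF ^ d1 * (dF * bF) ^ k1 * dF ^ f1)}

/-!
Write `T k = b (d b)^k`. Outside the degenerate cases `b = 1` or `d = 1`, a strict 2-PIM consists of
`1`, `d` and the elements `d^i · T k · d^j`, so it is determined by the relations `T a = T m`,
`T a = d · T m`, `T a = T m · d` and `T a = d · T m · d`.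

The first kind is a congruence on `ℕ`, hence given by an index `k` and a period `p`. Multiplying by
`b` shows that `T a = d · T m` says exactly that `T m = T (a + 1)` and `T a = d · T (a + 1)`, and
the latter can be carried down to the index; the third kind is the mirror image, and the last is a
conjunction of the two middle ones. So a nondegenerate strict 2-PIM is determined by `k`, `p` and
whether `T k = d · T (k + 1)` and `T k = T (k + 1) · d` hold. Either of these gives
`T k = T (k + 2)` and so `p ∣ 2`, which lets one equation `T k = d^i · T m · d^j` encode all of it.
-/

section IndexPeriod

/-- The congruence `c` on `ℕ` has index `k` and period `p`: it is the one whose nontrivial relations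
are the congruences modulo `p` between numbers that are at least `k`. -/
structure HasIndexPeriod (c : AddCon ℕ) (k p : ℕ) : Prop where
  pos : 0 < p
  rel : c k (k + p)
  eq_or_modEq : ∀ {a m}, c a m → a = m ∨ (k ≤ a ∧ k ≤ m ∧ a ≡ m [MOD p])

variable {c : AddCon ℕ} {k p a m q : ℕ}

theorem natCon_add_mul (h : c k (k + p)) (n : ℕ) : c k (k + p * n) := by
  induction n with
  | zero => exact c.refl k
  | succ n ih =>
    have shifted : c (k + p * n) (k + p + p * n) := c.add h (c.refl (p * n))
    rw [Nat.mul_succ, add_comm (p * n), ← add_assoc]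
    exact c.trans ih shifted

theorem natCon_of_modEq (h : c k (k + p)) (ha : k ≤ a) (hm : k ≤ m) (ham : a ≡ m [MOD p]) :
    c a m := by
  wlog hle : a ≤ m generalizing a m
  · exact c.symm (this hm ha ham.symm (le_of_not_ge hle))
  obtain ⟨i, rfl⟩ := Nat.exists_eq_add_of_le ha
  obtain ⟨n, hn⟩ := (Nat.modEq_iff_dvd' hle).1 ham
  have hm' : m = k + p * n + i := by omega
  exact hm' ▸ c.add (natCon_add_mul h n) (c.refl i)

theorem exists_natCon_add (h : c k (k + p)) (hp : 0 < p) (a : ℕ) : ∃ n, c k (a + n) := by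
  have ha : a ≤ k + p * a := (Nat.le_mul_of_pos_left a hp).trans (Nat.le_add_left _ _)
  obtain ⟨n, hn⟩ := Nat.exists_eq_add_of_le ha
  exact ⟨n, hn ▸ natCon_add_mul h a⟩

theorem natCon_add_of_period (h : c k (k + p)) (hp : 0 < p) (ha : c a (a + q)) :
    c k (k + q) := by
  obtain ⟨n, hn⟩ := exists_natCon_add h hp a
  have shifted : c (a + n) (a + n + q) := by
    simpa only [add_right_comm] using c.add ha (c.refl n)
  exact c.trans (c.trans hn shifted) (c.symm (c.add hn (c.refl q)))

theorem HasIndexPeriod.le_and_dvd (h : HasIndexPeriod c k p) (hq : 0 < q) (ha : c a (a + q)) :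
    k ≤ a ∧ p ∣ q := by
  obtain heq | ⟨hka, -, hmod⟩ := h.eq_or_modEq ha
  · omega
  · exact ⟨hka, by simpa using (Nat.modEq_iff_dvd' (Nat.le_add_right a q)).1 hmod⟩

theorem exists_hasIndexPeriod (h : ∃ k p, 0 < p ∧ c k (k + p)) : ∃ k p, HasIndexPeriod c k p := by
  classical
  obtain ⟨k, hk, hk_min⟩ : ∃ k, (∃ p, 0 < p ∧ c k (k + p)) ∧ ∀ a q, 0 < q → c a (a + q) → k ≤ a :=
    ⟨Nat.find h, Nat.find_spec h, fun a q hq ha => Nat.find_min' h ⟨q, hq, ha⟩⟩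
  obtain ⟨p, ⟨hp, hkp⟩, hp_min⟩ :
      ∃ p, (0 < p ∧ c k (k + p)) ∧ ∀ q, 0 < q → c k (k + q) → p ≤ q :=
    ⟨Nat.find hk, Nat.find_spec hk, fun q hq hkq => Nat.find_min' hk ⟨hq, hkq⟩⟩
  refine ⟨k, p, hp, hkp, fun {a m} ham => ?_⟩
  wlog hle : a ≤ m generalizing a m
  · exact (this (c.symm ham) (le_of_not_ge hle)).imp Eq.symm fun ⟨hm, ha, e⟩ => ⟨ha, hm, e.symm⟩
  obtain ⟨q, rfl⟩ := Nat.exists_eq_add_of_le hle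
  rcases q.eq_zero_or_pos with rfl | hq
  · exact Or.inl rfl
  have hka : k ≤ a := hk_min a q hq ham
  have hkq : c k (k + q) := natCon_add_of_period hkp hp ham
  have hmod : c k (k + q % p) :=
    c.trans hkq (natCon_of_modEq hkp (by omega) (by omega) ((Nat.mod_modEq q p).symm.add_left k))
  have hdvd : p ∣ q := by
    by_contra hndvd
    have hpos : 0 < q % p := Nat.pos_of_ne_zero (mt Nat.dvd_of_mod_eq_zero hndvd)
    exact (hp_min _ hpos hmod).not_gt (Nat.mod_lt q hp)
  exact Or.inr ⟨hka, by omega, (Nat.modEq_iff_dvd' hle).2 (by simpa using hdvd)⟩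

theorem natCon_eq_bot_or_exists_hasIndexPeriod (c : AddCon ℕ) :
    c = ⊥ ∨ ∃ k p, HasIndexPeriod c k p := by
  refine or_iff_not_imp_right.2 fun h => eq_bot_iff.2 fun a m ham => ?_
  have no_rel : ∀ k p, 0 < p → ¬ c k (k + p) := fun k p hp hkp =>
    h (exists_hasIndexPeriod ⟨k, p, hp, hkp⟩)
  rcases lt_trichotomy a m with hlt | rfl | hlt
  · obtain ⟨q, rfl⟩ := Nat.exists_eq_add_of_le hlt.le
    exact absurd ham (no_rel a q (by omega))
  · rfl
  · obtain ⟨q, rfl⟩ := Nat.exists_eq_add_of_le hlt.le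
    exact absurd (c.symm ham) (no_rel m q (by omega))

end IndexPeriod

section AltProd

open MulOpposite

variable {M : Type*} [Monoid M] {d b : M}

/-- The alternating product `b d b ⋯ d b` with `k` factors `d`. -/
def altProd (d b : M) (k : ℕ) : M := b * (d * b) ^ k

theorem altProd_add (a n : ℕ) : altProd d b (a + n) = altProd d b a * (d * b) ^ n := by
  simp only [altProd, pow_add, mul_assoc]

theorem b_mul_d_mul_altProd (k : ℕ) : b * (d * altProd d b k) = altProd d b (k + 1) := by
  simp only [altProd, pow_succ', mul_assoc]

theorem op_altProd (k : ℕ) : op (altProd d b k) = altProd (op d) (op b) k := by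
  simp only [altProd, ← mul_pow_mul, op_mul, op_pow]

theorem altProd_mul_d_mul_b (k : ℕ) : altProd d b k * d * b = altProd d b (k + 1) :=
  op_injective <| by
    simpa only [op_mul, op_altProd] using b_mul_d_mul_altProd (d := op d) (b := op b) k

/-- The product `d^i · b (d b)^k · d^j`. In a strict 2-PIM, the elements other than `1` and `d` have
this form. -/
def normalForm (d b : M) (i k j : ℕ) : M := d ^ i * altProd d b k * d ^ j

theorem normalForm_zero_zero (k : ℕ) : normalForm d b 0 k 0 = altProd d b k := by
  rw [normalForm, pow_zero, one_mul, mul_one]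

variable (d b) in
/-- The congruence on `ℕ` relating the exponents of equal alternating products. -/
def altCon : AddCon ℕ where
  toSetoid := Setoid.ker (altProd d b)
  add' {w x y z} (hwx : altProd d b w = altProd d b x) (hyz : altProd d b y = altProd d b z) := by
    change altProd d b (w + y) = altProd d b (x + z)
    rw [altProd_add, hwx, ← altProd_add, add_comm x y, altProd_add, hyz, ← altProd_add,
      add_comm z x]

theorem altCon_iff {a m : ℕ} : altCon d b a m ↔ altProd d b a = altProd d b m := Iff.rfl

theorem altProd_add_right_congr {a m : ℕ} (h : altProd d b a = altProd d b m) (n : ℕ) :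
    altProd d b (a + n) = altProd d b (m + n) := by
  rw [altProd_add, h, altProd_add]

theorem map_altProd {M' : Type*} [Monoid M'] (f : M →* M') (k : ℕ) :
    f (altProd d b k) = altProd (f d) (f b) k := by
  simp only [altProd, map_mul, map_pow]

theorem map_normalForm {M' : Type*} [Monoid M'] (f : M →* M') (i k j : ℕ) :
    f (normalForm d b i k j) = normalForm (f d) (f b) i k j := by
  simp only [normalForm, map_mul, map_pow, map_altProd]

theorem altProd_eq_d_mul_of_period {k p a : ℕ} (hkp : altProd d b k = altProd d b (k + p))
    (hp : 0 < p) (ha : altProd d b a = d * altProd d b (a + 1)) :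
    altProd d b k = d * altProd d b (k + 1) := by
  obtain ⟨n, hn⟩ := exists_natCon_add (c := altCon d b) hkp hp a
  rw [altCon_iff] at hn
  calc altProd d b k = d * altProd d b (a + 1) * (d * b) ^ n := by rw [hn, altProd_add, ha]
    _ = d * altProd d b (a + n + 1) := by rw [mul_assoc, ← altProd_add, add_right_comm]
    _ = d * altProd d b (k + 1) := by rw [altProd_add_right_congr hn 1]

theorem altProd_eq_mul_d_of_period {k p a : ℕ} (hkp : altProd d b k = altProd d b (k + p))
    (hp : 0 < p) (ha : altProd d b a = altProd d b (a + 1) * d) :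
    altProd d b k = altProd d b (k + 1) * d :=
  op_injective <| by
    simpa only [op_mul, op_altProd] using altProd_eq_d_mul_of_period
      (by rw [← op_altProd, hkp, op_altProd]) hp (by rw [← op_altProd, ha, op_mul, op_altProd])

theorem altProd_eq_d_mul_of_le {k a : ℕ} (hk : altProd d b k = d * altProd d b (k + 1))
    (hka : k ≤ a) :
    altProd d b a = d * altProd d b (a + 1) := by
  obtain ⟨n, rfl⟩ := Nat.exists_eq_add_of_le hka
  rw [add_right_comm, altProd_add, hk, mul_assoc, ← altProd_add]

theorem altProd_eq_mul_d_of_le {k a : ℕ} (hk : altProd d b k = altProd d b (k + 1) * d)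
    (hka : k ≤ a) :
    altProd d b a = altProd d b (a + 1) * d :=
  op_injective <| by
    simpa only [op_mul, op_altProd] using altProd_eq_d_mul_of_le
      (by rw [← op_altProd, hk, op_mul, op_altProd]) hka

end AltProd

/-- An involution `d` and an idempotent `b`, the generators of a strict 2-PIM. -/
structure IsPIMPair {M : Type*} [Monoid M] (d b : M) : Prop where
  d_mul_d : d * d = 1
  b_mul_b : b * b = b

namespace IsPIMPair

open MulOpposite

variable {M : Type*} [Monoid M] {d b : M} {a m k p q i j i' j' : ℕ}

theorem op (h : IsPIMPair d b) : IsPIMPair (op d) (op b) :=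
  ⟨by rw [← op_mul, h.d_mul_d, op_one], by rw [← op_mul, h.b_mul_b]⟩

theorem d_mul_cancel (h : IsPIMPair d b) (x : M) : d * (d * x) = x := by
  rw [← mul_assoc, h.d_mul_d, one_mul]

theorem mul_d_cancel (h : IsPIMPair d b) (x : M) : x * d * d = x := by
  rw [mul_assoc, h.d_mul_d, mul_one]

theorem d_pow_mul_self (h : IsPIMPair d b) (i : ℕ) : d ^ i * d ^ i = 1 := by
  rw [← (Commute.refl d).mul_pow, h.d_mul_d, one_pow]

theorem isUnit_d (h : IsPIMPair d b) : IsUnit d := ⟨⟨d, d, h.d_mul_d, h.d_mul_d⟩, rfl⟩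

theorem d_pow_of_even (h : IsPIMPair d b) (hi : Even i) : d ^ i = 1 := by
  obtain ⟨n, rfl⟩ := hi
  rw [pow_add, h.d_pow_mul_self]

theorem d_pow_of_odd (h : IsPIMPair d b) (hi : Odd i) : d ^ i = d := by
  obtain ⟨n, rfl⟩ := hi
  rw [pow_succ, h.d_pow_of_even (even_two_mul n), one_mul]

theorem b_mul_altProd (h : IsPIMPair d b) (k : ℕ) : b * altProd d b k = altProd d b k := by
  rw [altProd, ← mul_assoc, h.b_mul_b]

theorem altProd_mul_b (h : IsPIMPair d b) (k : ℕ) : altProd d b k * b = altProd d b k :=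
  op_injective <| by simpa only [op_mul, op_altProd] using h.op.b_mul_altProd k

theorem b_eq_one_of_isUnit (h : IsPIMPair d b) (hu : IsUnit (normalForm d b i k j)) :
    b = 1 := by
  have hT : altProd d b k = d ^ i * normalForm d b i k j * d ^ j := by
    rw [normalForm, ← mul_assoc, ← mul_assoc, h.d_pow_mul_self, one_mul, mul_assoc,
      h.d_pow_mul_self, mul_one]
  have hTu : IsUnit (altProd d b k) := by
    rw [hT]
    exact ((h.isUnit_d.pow i).mul hu).mul (h.isUnit_d.pow j)
  exact hTu.mul_right_cancel ((h.b_mul_altProd k).trans (one_mul _).symm)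

theorem altProd_eq_succ_of_eq_d_mul (h : IsPIMPair d b) (e : altProd d b a = d * altProd d b m) :
    altProd d b a = altProd d b (m + 1) := by
  rw [← h.b_mul_altProd, e, b_mul_d_mul_altProd]

theorem altProd_eq_d_mul_iff (h : IsPIMPair d b) :
    altProd d b a = d * altProd d b m ↔
      altProd d b m = altProd d b (a + 1) ∧ altProd d b a = d * altProd d b (a + 1) := by
  refine ⟨fun e => ?_, fun ⟨hm, ha⟩ => hm ▸ ha⟩
  have hm : altProd d b m = altProd d b (a + 1) :=
    h.altProd_eq_succ_of_eq_d_mul (by rw [e, h.d_mul_cancel])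
  exact ⟨hm, hm ▸ e⟩

theorem altProd_eq_mul_d_iff (h : IsPIMPair d b) :
    altProd d b a = altProd d b m * d ↔
      altProd d b m = altProd d b (a + 1) ∧ altProd d b a = altProd d b (a + 1) * d := by
  simpa only [← op_altProd, ← op_mul, op_inj] using h.op.altProd_eq_d_mul_iff (a := a) (m := m)

theorem altProd_eq_d_mul_mul_d_iff (h : IsPIMPair d b) :
    altProd d b a = d * altProd d b m * d ↔
      altProd d b a = d * altProd d b (m + 1) ∧ altProd d b m = altProd d b (m + 1) * d := by
  constructor
  · intro e
    have hL : altProd d b a = d * altProd d b (m + 1) := by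
      rw [← h.altProd_mul_b a, e, mul_assoc d, mul_assoc d, altProd_mul_d_mul_b]
    refine ⟨hL, ?_⟩
    rw [← h.d_mul_cancel (altProd d b (m + 1)), ← hL, e, mul_assoc d, h.mul_d_cancel,
      h.d_mul_cancel]
  · rintro ⟨hL, hR⟩
    rw [mul_assoc, hR, h.mul_d_cancel, hL]

theorem altProd_eq_add_two_of_eq_d_mul (h : IsPIMPair d b)
    (e : altProd d b a = d * altProd d b (a + 1)) : altProd d b a = altProd d b (a + 2) :=
  h.altProd_eq_succ_of_eq_d_mul e

theorem altProd_eq_add_two_of_eq_mul_d (h : IsPIMPair d b)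
    (e : altProd d b a = altProd d b (a + 1) * d) : altProd d b a = altProd d b (a + 2) :=
  op_injective <| by
    simpa only [op_altProd] using h.op.altProd_eq_add_two_of_eq_d_mul
      (by rw [← op_altProd, e, op_mul, op_altProd])

theorem altProd_eq_d_mul_add_iff (h : IsPIMPair d b) :
    altProd d b k = d * altProd d b (k + q) ↔
      altProd d b k = altProd d b (k + (q + 1)) ∧ altProd d b k = d * altProd d b (k + 1) := by
  refine ⟨fun e => ⟨h.altProd_eq_succ_of_eq_d_mul e, (h.altProd_eq_d_mul_iff.1 e).2⟩, ?_⟩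
  rintro ⟨hE, hL⟩
  refine h.altProd_eq_d_mul_iff.2 ⟨?_, hL⟩
  calc altProd d b (k + q) = altProd d b (k + 2 + q) :=
        altProd_add_right_congr (h.altProd_eq_add_two_of_eq_d_mul hL) q
    _ = altProd d b (k + (q + 1) + 1) := by congr 1; omega
    _ = altProd d b (k + 1) := (altProd_add_right_congr hE 1).symm

theorem altProd_eq_mul_d_add_iff (h : IsPIMPair d b) :
    altProd d b k = altProd d b (k + q) * d ↔
      altProd d b k = altProd d b (k + (q + 1)) ∧ altProd d b k = altProd d b (k + 1) * d := by
  simpa only [← op_altProd, ← op_mul, op_inj] using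
    h.op.altProd_eq_d_mul_add_iff (k := k) (q := q)

theorem altProd_eq_d_mul_succ_mul_d_iff (h : IsPIMPair d b) :
    altProd d b k = d * altProd d b (k + 1) * d ↔
      altProd d b k = altProd d b (k + 1) ∧ altProd d b k = d * altProd d b (k + 1) ∧
        altProd d b k = altProd d b (k + 1) * d := by
  constructor
  · intro e
    obtain ⟨hL₂, hR₁⟩ := h.altProd_eq_d_mul_mul_d_iff.1 e
    obtain ⟨h₂₁, hL⟩ := h.altProd_eq_d_mul_iff.1 hL₂
    have hE : altProd d b k = altProd d b (k + 1) :=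
      (h.altProd_eq_add_two_of_eq_d_mul hL).trans h₂₁
    refine ⟨hE, hL, ?_⟩
    calc altProd d b k = altProd d b (k + 1) := hE
      _ = altProd d b (k + 1) * d := h₂₁ ▸ hR₁
  · rintro ⟨hE, hL, hR⟩
    rw [← hL, hE, ← hR, hE]

theorem b_mul_d_pow_mul_altProd (h : IsPIMPair d b) (i k : ℕ) :
    b * (d ^ i * altProd d b k) = altProd d b (if Even i then k else k + 1) := by
  split_ifs with hi
  · rw [h.d_pow_of_even hi, one_mul, h.b_mul_altProd]
  · rw [h.d_pow_of_odd (Nat.not_even_iff_odd.1 hi), b_mul_d_mul_altProd]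

theorem normalForm_eq_iff (h : IsPIMPair d b) :
    normalForm d b i a j = normalForm d b i' m j' ↔
      altProd d b a = d ^ (i + i') * altProd d b m * d ^ (j' + j) := by
  have move : ∀ x y : M, d ^ i * x * d ^ j = y ↔ x = d ^ i * y * d ^ j := fun x y => by
    have hi := h.d_pow_mul_self i
    have hj := h.d_pow_mul_self j
    constructor <;> rintro rfl <;> simp only [← mul_assoc, hi, one_mul] <;>
      simp only [mul_assoc, hj, mul_one]
  rw [normalForm, move]
  simp only [normalForm, pow_add, mul_assoc]

section Transfer

variable {M' : Type*} [Monoid M'] {d' b' : M'}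

theorem normalForm_eq_of_eq (h : IsPIMPair d b) (h' : IsPIMPair d' b')
    (hE : altCon d b ≤ altCon d' b')
    (hL : ∀ n, altProd d b n = d * altProd d b (n + 1) →
      altProd d' b' n = d' * altProd d' b' (n + 1))
    (hR : ∀ n, altProd d b n = altProd d b (n + 1) * d →
      altProd d' b' n = altProd d' b' (n + 1) * d')
    (e : normalForm d b i a j = normalForm d b i' m j') :
    normalForm d' b' i a j = normalForm d' b' i' m j' := by
  have left : ∀ {a m}, altProd d b a = d * altProd d b m → altProd d' b' a = d' * altProd d' b' m :=
    fun e => h'.altProd_eq_d_mul_iff.2 ((h.altProd_eq_d_mul_iff.1 e).imp (@hE _ _) (hL _))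
  have right : ∀ {a m}, altProd d b a = altProd d b m * d →
      altProd d' b' a = altProd d' b' m * d' :=
    fun e => h'.altProd_eq_mul_d_iff.2 ((h.altProd_eq_mul_d_iff.1 e).imp (@hE _ _) (hR _))
  rw [h.normalForm_eq_iff] at e
  rw [h'.normalForm_eq_iff]
  generalize i + i' = r at *
  generalize j' + j = s at *
  rcases r.even_or_odd with hr | hr <;> rcases s.even_or_odd with hs | hs <;>
    simp only [h.d_pow_of_even, h.d_pow_of_odd, h'.d_pow_of_even, h'.d_pow_of_odd, hr, hs,
      one_mul, mul_one] at e ⊢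
  · exact hE e
  · exact right e
  · exact left e
  · exact h'.altProd_eq_d_mul_mul_d_iff.2
      ((h.altProd_eq_d_mul_mul_d_iff.1 e).imp left right)

theorem normalForm_eq_of_hasIndexPeriod (h : IsPIMPair d b) (h' : IsPIMPair d' b')
    (hkp : HasIndexPeriod (altCon d b) k p)
    (hE : altProd d' b' k = altProd d' b' (k + p))
    (hL : altProd d b k = d * altProd d b (k + 1) → altProd d' b' k = d' * altProd d' b' (k + 1))
    (hR : altProd d b k = altProd d b (k + 1) * d → altProd d' b' k = altProd d' b' (k + 1) * d')
    (e : normalForm d b i a j = normalForm d b i' m j') :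
    normalForm d' b' i a j = normalForm d' b' i' m j' := by
  refine h.normalForm_eq_of_eq h' (fun a m ham => ?_) (fun n hn => ?_) (fun n hn => ?_) e
  · obtain rfl | ⟨hka, hkm, hmod⟩ := hkp.eq_or_modEq ham
    · rfl
    · exact natCon_of_modEq (c := altCon d' b') hE hka hkm hmod
  · have hkn := (hkp.le_and_dvd two_pos (h.altProd_eq_add_two_of_eq_d_mul hn)).1
    exact altProd_eq_d_mul_of_le (hL (altProd_eq_d_mul_of_period hkp.rel hkp.pos hn)) hkn
  · have hkn := (hkp.le_and_dvd two_pos (h.altProd_eq_add_two_of_eq_mul_d hn)).1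
    exact altProd_eq_mul_d_of_le (hR (altProd_eq_mul_d_of_period hkp.rel hkp.pos hn)) hkn

theorem normalForm_eq_of_altCon_eq_bot (h : IsPIMPair d b) (h' : IsPIMPair d' b')
    (hbot : altCon d b = ⊥)
    (e : normalForm d b i a j = normalForm d b i' m j') :
    normalForm d' b' i a j = normalForm d' b' i' m j' := by
  have no_rel : ∀ n, altProd d b n ≠ altProd d b (n + 2) := fun n hn => by
    have hn' : (⊥ : AddCon ℕ) n (n + 2) := hbot ▸ hn
    have : n = n + 2 := hn'
    omega
  exact h.normalForm_eq_of_eq h' (hbot ▸ bot_le)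
    (fun n hn => absurd (h.altProd_eq_add_two_of_eq_d_mul hn) (no_rel n))
    (fun n hn => absurd (h.altProd_eq_add_two_of_eq_mul_d hn) (no_rel n)) e

end Transfer

end IsPIMPair

theorem exists_altProd_eq_iff (k : ℕ) {p : ℕ} (hp : 0 < p) (P Q : Prop) (hPQ : P → Q → p ∣ 2) :
    ∃ i j m, i ≤ 1 ∧ j ≤ 1 ∧ ∀ {M : Type*} [Monoid M] {d b : M}, IsPIMPair d b →
      (altProd d b k = normalForm d b i m j ↔
        altProd d b k = altProd d b (k + p) ∧
          (P → altProd d b k = d * altProd d b (k + 1)) ∧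
          (Q → altProd d b k = altProd d b (k + 1) * d)) := by
  obtain ⟨q, rfl⟩ := Nat.exists_eq_add_one.2 hp
  by_cases hP : P <;> by_cases hQ : Q
  · simp only [hP, hQ, true_imp_iff] at hPQ ⊢
    obtain hq | hq := (Nat.dvd_prime Nat.prime_two).1 hPQ
    · obtain rfl : q = 0 := by omega
      exact ⟨1, 1, k + 1, le_rfl, le_rfl, fun h => by
        simpa only [normalForm, pow_one] using h.altProd_eq_d_mul_succ_mul_d_iff⟩
    · obtain rfl : q = 1 := by omega
      exact ⟨1, 1, k, le_rfl, le_rfl, fun h => by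
        rw [normalForm, pow_one, h.altProd_eq_d_mul_mul_d_iff]
        exact ⟨fun e => ⟨h.altProd_eq_add_two_of_eq_d_mul e.1, e⟩, And.right⟩⟩
  · exact ⟨1, 0, k + q, le_rfl, zero_le_one, fun h => by
      simpa [normalForm, hP, hQ] using h.altProd_eq_d_mul_add_iff⟩
  · exact ⟨0, 1, k + q, zero_le_one, le_rfl, fun h => by
      simpa [normalForm, hP, hQ] using h.altProd_eq_mul_d_add_iff⟩
  · exact ⟨0, 0, k + (q + 1), zero_le_one, zero_le_one, fun _ => by simp [normalForm, hP, hQ]⟩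

section Representatives

theorem exists_mem_con_of_mul_closed {α : Type*} {c : Con (FreeMonoid α)}
    {N : Set (FreeMonoid α)} (h1 : 1 ∈ N)
    (hmul : ∀ x, ∀ n ∈ N, ∃ m ∈ N, c (FreeMonoid.of x * n) m) (w : FreeMonoid α) :
    ∃ n ∈ N, c w n := by
  induction w using FreeMonoid.inductionOn' with
  | one => exact ⟨1, h1, c.refl 1⟩
  | of_mul x w ih =>
    obtain ⟨n, hn, hwn⟩ := ih
    obtain ⟨m, hm, hnm⟩ := hmul x n hn
    exact ⟨m, hm, c.trans (c.mul (c.refl _) hwn) hnm⟩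

theorem con_eq_of_le_of_representatives {M : Type*} [Mul M] {c c' : Con M} {N : Set M}
    (hle : c' ≤ c) (hN : ∀ w, ∃ n ∈ N, c' w n) (hinj : ∀ n ∈ N, ∀ m ∈ N, c n m → c' n m) :
    c = c' := by
  refine le_antisymm (fun x y hxy => ?_) hle
  obtain ⟨n, hn, hxn⟩ := hN x
  obtain ⟨m, hm, hym⟩ := hN y
  have hnm : c n m := c.trans (c.symm (hle hxn)) (c.trans hxy (hle hym))
  exact c'.trans hxn (c'.trans (hinj n hn m hm hnm) (c'.symm hym))

end Representatives

section Presentation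

variable {c c' : Con F2} {R : Set (F2 × F2)} {u v w : F2}

theorem presCon_of_mem (h : (u, v) ∈ R) : presCon R u v :=
  ConGen.Rel.of _ _ (Or.inr (Or.inr h))

theorem presCon_mono {R' : Set (F2 × F2)} (h : R ⊆ R') : presCon R ≤ presCon R' :=
  Con.conGen_mono fun _ _ => Or.imp_right (Or.imp_right (@h _))

theorem presCon_empty_le (R : Set (F2 × F2)) : presCon ∅ ≤ presCon R :=
  presCon_mono (Set.empty_subset R)

theorem presCon_le (hc : presCon ∅ ≤ c) (hR : ∀ x y, (x, y) ∈ R → c x y) : presCon R ≤ c := by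
  refine Con.conGen_le.2 fun x y hxy => ?_
  rcases hxy with hd | hb | hxy
  · exact hc (ConGen.Rel.of _ _ (Or.inl hd))
  · exact hc (ConGen.Rel.of _ _ (Or.inr (Or.inl hb)))
  · exact hR x y hxy

theorem isPIMPair_of_presCon_empty_le (hc : presCon ∅ ≤ c) :
    IsPIMPair (dF : c.Quotient) (bF : c.Quotient) :=
  ⟨(Con.eq c).2 (hc (ConGen.Rel.of _ _ (Or.inl rfl))),
    (Con.eq c).2 (hc (ConGen.Rel.of _ _ (Or.inr (Or.inl rfl))))⟩

/-- Presented by the base relations and at most one relation of the generic form. -/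
def HasGenericPresentation (c : Con F2) : Prop :=
  ∃ S' : Set (F2 × F2), S' ⊆ genericEqs ∧ S'.Subsingleton ∧ c = presCon S'

theorem hasGenericPresentation_of_eq_singleton (h : (u, v) ∈ genericEqs)
    (hc : c = presCon {(u, v)}) : HasGenericPresentation c :=
  ⟨{(u, v)}, Set.singleton_subset_iff.2 h, Set.subsingleton_singleton, hc⟩

theorem presCon_singleton_le (hc : presCon ∅ ≤ c) (huv : c u v) : presCon {(u, v)} ≤ c :=
  presCon_le hc fun x y hxy => by
    obtain ⟨rfl, rfl⟩ := Prod.mk.inj hxy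
    exact huv

theorem con_eq_of_le_of_representatives_pair (hle : c' ≤ c) (hw : c w 1 → c' w 1)
    (hd : c' dF 1 ∨ c' dF w) (hdw : c' (dF * w) 1 ∨ c' (dF * w) w)
    (hb : c' bF 1 ∨ c' bF w) (hbw : c' (bF * w) 1 ∨ c' (bF * w) w) : c = c' := by
  have closed : ∀ x, (c' x 1 ∨ c' x w) → (c' (x * w) 1 ∨ c' (x * w) w) →
      ∀ n ∈ ({1, w} : Set F2), ∃ m ∈ ({1, w} : Set F2), c' (x * n) m := by
    rintro x hx hxw n (rfl | rfl)
    · simpa using hx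
    · simpa using hxw
  refine con_eq_of_le_of_representatives hle
    (exists_mem_con_of_mul_closed (Or.inl rfl)
      (Bool.forall_bool.2 ⟨closed bF hb hbw, closed dF hd hdw⟩)) ?_
  rintro n (rfl | rfl) m (rfl | rfl) hnm
  · exact c'.refl _
  · exact c'.symm (hw (c.symm hnm))
  · exact hw hnm
  · exact c'.refl _

theorem hasGenericPresentation_of_b_of_d (hc : presCon ∅ ≤ c) (hb : c bF 1) (hd : c dF 1) :
    HasGenericPresentation c := by
  refine hasGenericPresentation_of_eq_singleton (u := bF * dF) (v := 1)
    ⟨1, 1, 0, 0, 0, 0, by simp⟩ ?_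
  set c' := presCon {(bF * dF, 1)}
  have h' : IsPIMPair (dF : c'.Quotient) bF := isPIMPair_of_presCon_empty_le (presCon_empty_le _)
  have hbd' : c' (bF * dF) 1 := presCon_of_mem rfl
  have hbd_eq : (bF : c'.Quotient) * dF = 1 := (Con.eq c').2 hbd'
  have hb_eq : (bF : c'.Quotient) = 1 := by
    rw [← mul_one (bF : c'.Quotient), ← hbd_eq, ← mul_assoc, h'.b_mul_b]
  have hb' : c' bF 1 := (Con.eq c').1 hb_eq
  have hd' : c' dF 1 := (Con.eq c').1 (by rwa [hb_eq, one_mul] at hbd_eq)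
  exact con_eq_of_le_of_representatives_pair (w := dF) (presCon_singleton_le hc (c.mul hb hd))
    (fun _ => hd') (Or.inl hd') (Or.inl ((Con.eq c').1 h'.d_mul_d)) (Or.inl hb') (Or.inl hbd')

theorem hasGenericPresentation_of_b_of_not_d (hc : presCon ∅ ≤ c) (hb : c bF 1)
    (hd : ¬ c dF 1) : HasGenericPresentation c := by
  refine hasGenericPresentation_of_eq_singleton (u := bF) (v := 1)
    ⟨1, 0, 0, 0, 0, 0, by simp⟩ ?_
  set c' := presCon {(bF, 1)}
  have h' : IsPIMPair (dF : c'.Quotient) bF := isPIMPair_of_presCon_empty_le (presCon_empty_le _)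
  have hb' : c' bF 1 := presCon_of_mem rfl
  exact con_eq_of_le_of_representatives_pair (w := dF) (presCon_singleton_le hc hb)
    (fun h => absurd h hd) (Or.inr (c'.refl _)) (Or.inl ((Con.eq c').1 h'.d_mul_d))
    (Or.inl hb') (Or.inr (c'.mul hb' (c'.refl dF)))

theorem hasGenericPresentation_of_not_b_of_d (hc : presCon ∅ ≤ c) (hb : ¬ c bF 1)
    (hd : c dF 1) : HasGenericPresentation c := by
  refine hasGenericPresentation_of_eq_singleton (u := dF) (v := 1)
    ⟨0, 1, 0, 0, 0, 0, by simp⟩ ?_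
  set c' := presCon {(dF, 1)}
  have h' : IsPIMPair (dF : c'.Quotient) bF := isPIMPair_of_presCon_empty_le (presCon_empty_le _)
  have hd' : c' dF 1 := presCon_of_mem rfl
  exact con_eq_of_le_of_representatives_pair (w := bF) (presCon_singleton_le hc hd)
    (fun h => absurd h hb) (Or.inl hd') (Or.inr (c'.mul hd' (c'.refl bF)))
    (Or.inr (c'.refl _)) (Or.inr ((Con.eq c').1 h'.b_mul_b))

theorem altProd_mem_genericEqs {i j : ℕ} (a m : ℕ) (hi : i ≤ 1) (hj : j ≤ 1) :
    (altProd dF bF a, normalForm dF bF i m j) ∈ genericEqs := by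
  obtain rfl | rfl : i = 0 ∨ i = 1 := by omega
  · exact ⟨1, 0, 1, j, a, m, by simp [hj, normalForm, altProd]⟩
  · exact ⟨1, 0, 0, j, a, m + 1, by simp [hj, normalForm, altProd, pow_succ', mul_assoc]⟩

/-- The words `1`, `d` and the normal forms, which represent all elements of a strict 2-PIM. -/
def normalWords : Set F2 :=
  {1, dF} ∪ {w | ∃ i k j, w = normalForm dF bF i k j}

theorem coe_normalForm (i k j : ℕ) :
    ((normalForm dF bF i k j : F2) : c.Quotient) = normalForm (dF : c.Quotient) bF i k j :=
  map_normalForm c.mk' i k j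

theorem con_normalForm_iff {i a j i' m j' : ℕ} :
    c (normalForm dF bF i a j) (normalForm dF bF i' m j') ↔
      normalForm (dF : c.Quotient) bF i a j = normalForm (dF : c.Quotient) bF i' m j' := by
  rw [← Con.eq, coe_normalForm, coe_normalForm]

theorem con_altProd_iff {i a m j : ℕ} :
    c (altProd dF bF a) (normalForm dF bF i m j) ↔
      altProd (dF : c.Quotient) bF a = normalForm (dF : c.Quotient) bF i m j := by
  simpa only [normalForm_zero_zero] using con_normalForm_iff (c := c) (i := 0) (a := a) (j := 0)

theorem exists_mem_normalWords (hc : presCon ∅ ≤ c) (w : F2) : ∃ n ∈ normalWords, c w n := by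
  have h := isPIMPair_of_presCon_empty_le hc
  refine exists_mem_con_of_mul_closed (Or.inl (Or.inl rfl)) (Bool.forall_bool.2 ⟨?_, ?_⟩) w
  · change ∀ n ∈ normalWords, ∃ m ∈ normalWords, c (bF * n) m
    rintro n ((rfl | rfl) | ⟨i, k, j, rfl⟩)
    · exact ⟨_, Or.inr ⟨0, 0, 0, rfl⟩, by simpa [normalForm, altProd] using c.refl bF⟩
    · exact ⟨_, Or.inr ⟨0, 0, 1, rfl⟩, by simpa [normalForm, altProd] using c.refl (bF * dF)⟩
    · refine ⟨_, Or.inr ⟨0, if Even i then k else k + 1, j, rfl⟩, (Con.eq c).1 ?_⟩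
      rw [Con.coe_mul, coe_normalForm, coe_normalForm, normalForm, normalForm, pow_zero, one_mul,
        ← mul_assoc, h.b_mul_d_pow_mul_altProd]
  · change ∀ n ∈ normalWords, ∃ m ∈ normalWords, c (dF * n) m
    rintro n ((rfl | rfl) | ⟨i, k, j, rfl⟩)
    · exact ⟨dF, Or.inl (Or.inr rfl), by rw [mul_one]; exact c.refl _⟩
    · exact ⟨1, Or.inl (Or.inl rfl), (Con.eq c).1 h.d_mul_d⟩
    · refine ⟨_, Or.inr ⟨i + 1, k, j, rfl⟩, ?_⟩
      simpa only [normalForm, pow_succ', mul_assoc] using c.refl _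

theorem con_eq_of_le_of_normalWords (hc' : presCon ∅ ≤ c') (hle : c' ≤ c) (hb : ¬ c bF 1)
    (hd : ¬ c dF 1)
    (hnf : ∀ i a j i' m j', c (normalForm dF bF i a j) (normalForm dF bF i' m j') →
      c' (normalForm dF bF i a j) (normalForm dF bF i' m j')) :
    c = c' := by
  have h := isPIMPair_of_presCon_empty_le (hc'.trans hle)
  have not_unit : ∀ i k j, ∀ x ∈ ({1, dF} : Set F2), ¬ c x (normalForm dF bF i k j) := by
    intro i k j x hx hxn
    have hu : IsUnit (x : c.Quotient) := by
      rcases hx with rfl | rfl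
      · exact isUnit_one
      · exact h.isUnit_d
    rw [(Con.eq c).2 hxn, coe_normalForm] at hu
    exact hb ((Con.eq c).1 (h.b_eq_one_of_isUnit hu))
  refine con_eq_of_le_of_representatives hle (exists_mem_normalWords hc') ?_
  rintro n (hn | ⟨i, a, j, rfl⟩) m (hm | ⟨i', k, j', rfl⟩) hnm
  · rcases hn with rfl | rfl <;> rcases hm with rfl | rfl
    · exact c'.refl _
    · exact absurd (c.symm hnm) hd
    · exact absurd hnm hd
    · exact c'.refl _
  · exact absurd hnm (not_unit _ _ _ n hn)
  · exact absurd (c.symm hnm) (not_unit _ _ _ m hm)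
  · exact hnf _ _ _ _ _ _ hnm

theorem hasGenericPresentation_of_altCon_eq_bot (hc : presCon ∅ ≤ c) (hb : ¬ c bF 1)
    (hd : ¬ c dF 1) (hbot : altCon (dF : c.Quotient) bF = ⊥) : HasGenericPresentation c := by
  refine ⟨∅, Set.empty_subset _, Set.subsingleton_empty,
    con_eq_of_le_of_normalWords le_rfl hc hb hd fun i a j i' m j' e => ?_⟩
  rw [con_normalForm_iff] at e ⊢
  exact (isPIMPair_of_presCon_empty_le hc).normalForm_eq_of_altCon_eq_bot
    (isPIMPair_of_presCon_empty_le le_rfl) hbot e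

theorem hasGenericPresentation_of_hasIndexPeriod (hc : presCon ∅ ≤ c) (hb : ¬ c bF 1)
    (hd : ¬ c dF 1) {k p : ℕ} (hkp : HasIndexPeriod (altCon (dF : c.Quotient) bF) k p) :
    HasGenericPresentation c := by
  have h := isPIMPair_of_presCon_empty_le hc
  obtain ⟨i, j, m, hi, hj, encode⟩ := exists_altProd_eq_iff k hkp.pos
    (altProd (dF : c.Quotient) bF k = dF * altProd (dF : c.Quotient) bF (k + 1))
    (altProd (dF : c.Quotient) bF k = altProd (dF : c.Quotient) bF (k + 1) * dF)
    fun hL _ => (hkp.le_and_dvd two_pos (h.altProd_eq_add_two_of_eq_d_mul hL)).2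
  refine hasGenericPresentation_of_eq_singleton (altProd_mem_genericEqs k m hi hj) ?_
  set R : Set (F2 × F2) := {(altProd dF bF k, normalForm dF bF i m j)}
  have hc' := presCon_empty_le R
  have h' := isPIMPair_of_presCon_empty_le hc'
  have hrel := con_altProd_iff.2 ((encode h).2 ⟨hkp.rel, id, id⟩)
  obtain ⟨hE, hL, hR⟩ := (encode h').1 (con_altProd_iff.1 (presCon_of_mem rfl))
  refine con_eq_of_le_of_normalWords hc' (presCon_singleton_le hc hrel) hb hd
    fun i a j i' m j' e => ?_
  rw [con_normalForm_iff] at e ⊢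
  exact h.normalForm_eq_of_hasIndexPeriod h' hkp hE hL hR e

theorem stmt_14_general {c : Con F2} (hc : presCon ∅ ≤ c) :
    ∃ S' : Set (F2 × F2), S' ⊆ genericEqs ∧ S'.Subsingleton ∧ c = presCon S' := by
  by_cases hb : c bF 1 <;> by_cases hd : c dF 1
  · exact hasGenericPresentation_of_b_of_d hc hb hd
  · exact hasGenericPresentation_of_b_of_not_d hc hb hd
  · exact hasGenericPresentation_of_not_b_of_d hc hb hd
  obtain hbot | ⟨k, p, hkp⟩ :=
    natCon_eq_bot_or_exists_hasIndexPeriod (altCon (dF : c.Quotient) bF)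
  · exact hasGenericPresentation_of_altCon_eq_bot hc hb hd hbot
  · exact hasGenericPresentation_of_hasIndexPeriod hc hb hd hkp

end Presentation

/-- Every strict 2-PIM has a presentation with at most three defining equations:
`d² = 1`, `b² = b` and at most one further equation of the generic form. -/
theorem stmt_14 :
    ∀ S : Set (F2 × F2), S ⊆ genericEqs → S.Finite →
      ∃ S' : Set (F2 × F2), S' ⊆ genericEqs ∧ S'.Subsingleton ∧ presCon S = presCon S' :=
  fun S _ _ => stmt_14_general (presCon_empty_le S)
end

section
/- Consider the family 𝔼 of equations over the free monoid on {d, b}: eq00(k, ℓ): (d·b)^k = (d·b)^(k+ℓ) for k, ℓ ≥ 1; eq01°(k): (d·b)^k = (d·b)^(k+1)·d; eq01•(k): (d·b)^k = (d·b)^k·d; eq10°(k): (d·b)^k = (b·d)^k·b; eq10•(k): (d·b)^k = (b·d)^(k−1)·b; eq11°(k): (d·b)^k = (b·d)^k; eq11•(k): (d·b)^k = (b·d)^(k+1), each for k ≥ 1. For any two equations eq and eq' in 𝔼, the presented monoids ⟨d, b ∣ d² = 1, b² = b, eq⟩ and ⟨d, b ∣ d² = 1, b² = b, eq'⟩ are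 isomorphic as monoids if and only if eq and eq' belong to the same family with the same parameters. -/
/-- The monoid presented by `⟨d, b ∣ d² = 1, b² = b, R⟩`. -/
abbrev PresMon (R : Set (F2 × F2)) : Type := (presCon R).Quotient

/-- The seven parametrized families of normalized defining equations of strict 2-PIMs. -/
inductive NormEq : Type
  | e00 (k l : ℕ) : NormEq   -- (d·b)^k = (d·b)^(k+l)
  | e01c (k : ℕ) : NormEq    -- (d·b)^k = (d·b)^(k+1)·d
  | e01b (k : ℕ) : NormEq    -- (d·b)^k = (d·b)^k·d
  | e10c (k : ℕ) : NormEq    -- (d·b)^k = (b·d)^k·b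
  | e10b (k : ℕ) : NormEq    -- (d·b)^k = (b·d)^(k-1)·b
  | e11c (k : ℕ) : NormEq    -- (d·b)^k = (b·d)^k
  | e11b (k : ℕ) : NormEq    -- (d·b)^k = (b·d)^(k+1)

/-- The parameters of a normalized equation are (at least) `1`. -/
def NormEq.valid : NormEq → Prop
  | .e00 k l => 1 ≤ k ∧ 1 ≤ l
  | .e01c k => 1 ≤ k
  | .e01b k => 1 ≤ k
  | .e10c k => 1 ≤ k
  | .e10b k => 1 ≤ k
  | .e11c k => 1 ≤ k
  | .e11b k => 1 ≤ k

/-- The pair of words of the free monoid corresponding to a normalized equation. -/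
def NormEq.pair : NormEq → F2 × F2
  | .e00 k l => ((dF * bF) ^ k, (dF * bF) ^ (k + l))
  | .e01c k => ((dF * bF) ^ k, (dF * bF) ^ (k + 1) * dF)
  | .e01b k => ((dF * bF) ^ k, (dF * bF) ^ k * dF)
  | .e10c k => ((dF * bF) ^ k, (bF * dF) ^ k * bF)
  | .e10b k => ((dF * bF) ^ k, (bF * dF) ^ (k - 1) * bF)
  | .e11c k => ((dF * bF) ^ k, (bF * dF) ^ k)
  | .e11b k => ((dF * bF) ^ k, (bF * dF) ^ (k + 1))

/-! The monoid `⟨d, b ∣ d² = 1, b² = b⟩` has as normal forms `d ^ x` and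
`d ^ x * b * (d * b) ^ p * d ^ y` with `x, y ∈ {0, 1}`. Each equation of the list identifies words
with at least `k` letters `b` only, and on those it imposes the kernel of a well-understood
homomorphism: for instance `(d * b) ^ k = (d * b) ^ k * d` leaves exactly the value of `x` visible,
and `(d * b) ^ k = (b * d) ^ k` the parity of the number of letters `d`. Hence the presented monoid
is finite, and its order together with the least orders of its principal right and left ideals can
be computed; these three numbers recover the equation. The equations of type `10` are treated as
the mirror images of those of type `01`. -/

section Cardinality

theorem ncard_image_eq_natCard {α β γ : Type*} {f : α → β} {g : α → γ} {s : Set α}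
    (hfg : ∀ a ∈ s, ∀ b ∈ s, f a = f b ↔ g a = g b) (hg : ∀ c, ∃ a ∈ s, g a = c) :
    (f '' s).ncard = Nat.card γ := by
  choose r hrs hgr using hg
  have hinj : Function.Injective (f ∘ r) := fun c c' h => by
    rw [← hgr c, ← hgr c', ← hfg _ (hrs c) _ (hrs c')]
    exact h
  have hrange : f '' s = Set.range (f ∘ r) := by
    refine Set.Subset.antisymm ?_ (Set.range_subset_iff.2 fun c => Set.mem_image_of_mem f (hrs c))
    rintro _ ⟨a, ha, rfl⟩
    exact ⟨g a, (hfg _ (hrs _) _ ha).2 (hgr _)⟩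
  rw [hrange, Set.ncard_range_of_injective hinj]

theorem exists_ge_natCast_eq (l : ℕ) [NeZero l] (t : ℕ) (v : ZMod l) :
    ∃ p ≥ t, (p : ZMod l) = v := by
  refine ⟨v.val + l * t, ?_, by simp⟩
  exact (Nat.le_mul_of_pos_left t (NeZero.pos l)).trans (Nat.le_add_left _ _)

end Cardinality

section PrincipalIdeals

/-- The least number of elements of a principal right ideal `z * M`, where infinite ideals count
as `0`. -/
noncomputable def minRightIdealCard (M : Type*) [Monoid M] : ℕ :=
  ⨅ z : M, (Set.range (z * ·)).ncard

/-- The least number of elements of a principal left ideal `M * z`, where infinite ideals count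
as `0`. -/
noncomputable def minLeftIdealCard (M : Type*) [Monoid M] : ℕ :=
  ⨅ z : M, (Set.range (· * z)).ncard

/-- The order of a monoid and the least orders of its principal right and left ideals, the
isomorphism invariants that separate the presented monoids. -/
noncomputable def idealCards (M : Type*) [Monoid M] : ℕ × ℕ × ℕ :=
  (Nat.card M, minRightIdealCard M, minLeftIdealCard M)

variable {M N : Type*} [Monoid M] [Monoid N]

theorem minRightIdealCard_op : minRightIdealCard Mᵐᵒᵖ = minLeftIdealCard M := by
  refine (Equiv.iInf_congr MulOpposite.opEquiv fun z => ?_).symm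
  have hrange : Set.range (MulOpposite.op z * ·) = MulOpposite.op '' Set.range (· * z) := by
    rw [← Set.range_comp, ← MulOpposite.op_surjective.range_comp]
    rfl
  rw [MulOpposite.opEquiv_apply, hrange, Set.ncard_image_of_injective _ MulOpposite.op_injective]

theorem minRightIdealCard_congr (f : M ≃* N) :
    minRightIdealCard M = minRightIdealCard N := by
  refine Equiv.iInf_congr f.toEquiv fun z => ?_
  have hrange : Set.range (f z * ·) = f '' Set.range (z * ·) := by
    rw [← Set.range_comp, ← f.surjective.range_comp]
    exact congrArg Set.range (funext fun a => (map_mul f z a).symm)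
  exact (congrArg Set.ncard hrange).trans (Set.ncard_image_of_injective _ f.injective)

theorem minLeftIdealCard_congr (f : M ≃* N) : minLeftIdealCard M = minLeftIdealCard N := by
  rw [← minRightIdealCard_op, ← minRightIdealCard_op, minRightIdealCard_congr f.op]

theorem idealCards_congr (f : M ≃* N) : idealCards M = idealCards N := by
  rw [idealCards, idealCards, Nat.card_congr f.toEquiv, minRightIdealCard_congr f,
    minLeftIdealCard_congr f]

theorem idealCards_op : idealCards Mᵐᵒᵖ = (idealCards M).map id Prod.swap := by
  have hleft : minLeftIdealCard Mᵐᵒᵖ = minRightIdealCard M := by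
    rw [← minRightIdealCard_op]
    exact (minRightIdealCard_congr (MulEquiv.opOp M)).symm
  simp [idealCards, hleft, minRightIdealCard_op, Nat.card_congr MulOpposite.opEquiv.symm]

/-- `hw` says that `w` lies in the kernel of `M`, its least two-sided ideal. -/
theorem minRightIdealCard_eq_of_kernel [Finite M] {w : M} (hw : ∀ z, ∃ a c, a * z * c = w) :
    minRightIdealCard M = (Set.range (w * ·)).ncard := by
  refine le_antisymm (ciInf_le (OrderBot.bddBelow _) w) (le_ciInf fun z => ?_)
  obtain ⟨a, c, rfl⟩ := hw z
  have hsub : Set.range (a * z * c * ·) ⊆ (a * ·) '' Set.range (z * ·) := by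
    rintro _ ⟨m, rfl⟩
    exact ⟨z * (c * m), ⟨c * m, rfl⟩, by simp only [mul_assoc]⟩
  exact (Set.ncard_le_ncard hsub).trans (Set.ncard_image_le)

end PrincipalIdeals

section IdealCongruence

variable {M : Type*} [Mul M] {I : Set M}

/-- The congruence that agrees with `ρ` on a two-sided ideal `I` and is trivial elsewhere. For
`ρ = ⊤` this is the Rees congruence of `I`. -/
def idealCon (I : Set M) (hl : ∀ a, ∀ b ∈ I, a * b ∈ I) (hr : ∀ a ∈ I, ∀ b, a * b ∈ I)
    (ρ : Con M) : Con M where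
  r a b := a = b ∨ a ∈ I ∧ b ∈ I ∧ ρ a b
  iseqv.refl a := .inl rfl
  iseqv.symm := by
    rintro a b (rfl | ⟨ha, hb, h⟩)
    exacts [.inl rfl, .inr ⟨hb, ha, ρ.symm h⟩]
  iseqv.trans := by
    rintro a b c (rfl | ⟨ha, hb, h⟩) (rfl | ⟨hb', hc, h'⟩)
    exacts [.inl rfl, .inr ⟨hb', hc, h'⟩, .inr ⟨ha, hb, h⟩, .inr ⟨ha, hc, ρ.trans h h'⟩]
  mul' := by
    rintro a b c e (rfl | ⟨ha, hb, h⟩) (rfl | ⟨hc, he, h'⟩)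
    exacts [.inl rfl, .inr ⟨hl _ _ hc, hl _ _ he, ρ.mul (ρ.refl _) h'⟩,
      .inr ⟨hr _ ha _, hr _ hb _, ρ.mul h (ρ.refl _)⟩, .inr ⟨hr _ ha _, hr _ hb _, ρ.mul h h'⟩]

variable {hl : ∀ a, ∀ b ∈ I, a * b ∈ I} {hr : ∀ a ∈ I, ∀ b, a * b ∈ I} {ρ : Con M}

theorem idealCon_iff {a b : M} : idealCon I hl hr ρ a b ↔ a = b ∨ a ∈ I ∧ b ∈ I ∧ ρ a b := Iff.rfl

theorem idealCon_iff_of_mem {a b : M} (ha : a ∈ I) (hb : b ∈ I) :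
    idealCon I hl hr ρ a b ↔ ρ a b := by
  refine ⟨?_, fun h => .inr ⟨ha, hb, h⟩⟩
  rintro (rfl | ⟨-, -, h⟩)
  exacts [ρ.refl a, h]

theorem natCard_quotient_idealCon (hI : Iᶜ.Finite)
    (himage : ((↑) '' I : Set (idealCon I hl hr ρ).Quotient).Finite) :
    Nat.card (idealCon I hl hr ρ).Quotient =
      Iᶜ.ncard + ((↑) '' I : Set (idealCon I hl hr ρ).Quotient).ncard := by
  set mk : M → (idealCon I hl hr ρ).Quotient := (↑)
  have hinj : Set.InjOn mk Iᶜ := fun a ha b _ h =>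
    ((Con.eq _).1 h).resolve_right fun h' => ha h'.1
  have hdisj : Disjoint (mk '' Iᶜ) (mk '' I) := by
    refine Set.disjoint_left.2 ?_
    rintro _ ⟨a, ha, rfl⟩ ⟨b, hb, h⟩
    rcases (Con.eq _).1 h with rfl | ⟨-, ha', -⟩
    exacts [ha hb, ha ha']
  have hcover : mk '' Iᶜ ∪ mk '' I = Set.univ := by
    rw [← Set.image_union, Set.compl_union_self, Set.image_univ]
    exact Quotient.mk_surjective.range_eq
  rw [← Set.ncard_univ, ← hcover, Set.ncard_union_eq hdisj (hI.image _) himage,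
    hinj.ncard_image]

end IdealCongruence

/-- Normal forms for products of an involution `d` and an idempotent `b`: `unit x` stands for
`d ^ x` and `word p x y` for `d ^ x * b * (d * b) ^ p * d ^ y`, where `x, y : Bool` are read as
exponents `0, 1`. Exponents `p` in `ℕ` give the monoid `⟨d, b ∣ d² = 1, b² = b⟩`, and those in
`ZMod l` its quotient in which `p` is only known modulo `l`. -/
inductive NormalForm (A : Type*)
  | unit (x : Bool) : NormalForm A
  | word (p : A) (x y : Bool) : NormalForm A

namespace NormalForm

section Monoid

variable {A : Type*} [AddCommMonoidWithOne A]

/-- Multiplication of normal forms: between two letters `b`, a power `d ^ y * d ^ x'` either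
cancels and lets them merge, or is a single `d` that contributes another factor `d * b`. -/
protected def mul : NormalForm A → NormalForm A → NormalForm A
  | unit x, unit x' => unit (x ^^ x')
  | unit x, word q x' y' => word q (x ^^ x') y'
  | word p x y, unit x' => word p x (y ^^ x')
  | word p x y, word q x' y' => word (p + q + (y ^^ x').toNat) x y'

instance : Monoid (NormalForm A) where
  mul := NormalForm.mul
  one := unit false
  mul_assoc a b c := by
    change NormalForm.mul (NormalForm.mul a b) c = NormalForm.mul a (NormalForm.mul b c)
    cases a <;> cases b <;> cases c <;>
      simp [NormalForm.mul, add_assoc, add_comm, add_left_comm]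
  one_mul a := by
    change NormalForm.mul (unit false) a = a
    cases a <;> simp [NormalForm.mul]
  mul_one a := by
    change NormalForm.mul a (unit false) = a
    cases a <;> simp [NormalForm.mul]

theorem one_def : (1 : NormalForm A) = unit false := rfl

@[simp] theorem unit_mul_unit (x x' : Bool) : (unit x * unit x' : NormalForm A) = unit (x ^^ x') :=
  rfl

@[simp] theorem unit_mul_word (x : Bool) (q : A) (x' y' : Bool) :
    unit x * word q x' y' = word q (x ^^ x') y' := rfl

@[simp] theorem word_mul_unit (p : A) (x y x' : Bool) :
    word p x y * unit x' = word p x (y ^^ x') := rfl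

@[simp] theorem word_mul_word (p q : A) (x y x' y' : Bool) :
    word p x y * word q x' y' = word (p + q + (y ^^ x').toNat) x y' := rfl

end Monoid

section Presentation

/-- The normal form of a word in `d` and `b`. -/
def ofWord : F2 →* NormalForm ℕ :=
  FreeMonoid.lift fun a => if a then unit true else word 0 false false

@[simp] theorem ofWord_d : ofWord dF = unit true := by simp [ofWord, dF]

@[simp] theorem ofWord_b : ofWord bF = word 0 false false := by simp [ofWord, bF]

theorem ofWord_db_pow (p : ℕ) : ofWord ((dF * bF) ^ (p + 1)) = word p true false := by
  induction p with
  | zero => simp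
  | succ p ih => rw [pow_succ, map_mul, ih]; simp

theorem ofWord_bd_pow (p : ℕ) : ofWord ((bF * dF) ^ (p + 1)) = word p false true := by
  induction p with
  | zero => simp
  | succ p ih => rw [pow_succ, map_mul, ih]; simp

theorem ofWord_bd_pow_mul_b (p : ℕ) : ofWord ((bF * dF) ^ p * bF) = word p false false := by
  cases p with
  | zero => simp
  | succ p => rw [map_mul, ofWord_bd_pow]; simp

/-- The value of a normal form at elements `D` and `B` substituted for `d` and `b`. -/
def eval {Q : Type*} [Monoid Q] (D B : Q) : NormalForm ℕ → Q
  | unit x => D ^ x.toNat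
  | word p x y => D ^ x.toNat * (B * (D * B) ^ p) * D ^ y.toNat

theorem eval_d_mul {Q : Type*} [Monoid Q] {D : Q} (B : Q) (hD : D * D = 1) (a : NormalForm ℕ) :
    eval D B (unit true * a) = D * eval D B a := by
  cases a with
  | unit x => cases x <;> simp [eval, hD]
  | word p x y => cases x <;> simp [eval, ← mul_assoc, hD]

theorem eval_b_mul {Q : Type*} [Monoid Q] (D : Q) {B : Q} (hB : B * B = B) (a : NormalForm ℕ) :
    eval D B (word 0 false false * a) = B * eval D B a := by
  cases a with
  | unit x => simp [eval]
  | word p x y => cases x <;> simp [eval, ← mul_assoc, hB, pow_succ']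

theorem eval_ofWord {Q : Type*} [Monoid Q] (f : F2 →* Q) (hd : f dF * f dF = 1)
    (hb : f bF * f bF = f bF) (w : F2) : eval (f dF) (f bF) (ofWord w) = f w := by
  induction w using FreeMonoid.inductionOn' with
  | one => simp [one_def, eval]
  | of_mul a w ih =>
    rw [map_mul, map_mul, ← ih]
    cases a with
    | true => rw [← dF, ofWord_d, eval_d_mul _ hd]
    | false => rw [← bF, ofWord_b, eval_b_mul _ hb]

theorem ofWord_surjective : Function.Surjective ofWord := by
  have hunit : ∀ x, ∃ w, ofWord w = unit x
    | false => ⟨1, map_one ofWord⟩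
    | true => ⟨dF, ofWord_d⟩
  rintro (x | ⟨p, x, y⟩)
  · exact hunit x
  · obtain ⟨v, hv⟩ := hunit x
    obtain ⟨w, hw⟩ := hunit y
    exact ⟨v * ((bF * dF) ^ p * bF) * w, by
      rw [map_mul, map_mul, ofWord_bd_pow_mul_b, hv, hw]; simp⟩

theorem presCon_rel_d (R : Set (F2 × F2)) : presCon R (dF * dF) 1 :=
  ConGen.Rel.of _ _ (Set.mem_insert _ _)

theorem presCon_rel_b (R : Set (F2 × F2)) : presCon R (bF * bF) bF :=
  ConGen.Rel.of _ _ (Set.mem_insert_of_mem _ (Set.mem_insert _ _))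

theorem presCon_rel_of_mem {R : Set (F2 × F2)} {v w : F2} (h : (v, w) ∈ R) : presCon R v w :=
  ConGen.Rel.of _ _ (Set.mem_insert_of_mem _ (Set.mem_insert_of_mem _ h))

theorem ker_ofWord_le_presCon (R : Set (F2 × F2)) : Con.ker ofWord ≤ presCon R := by
  intro v w h
  have heval := eval_ofWord (presCon R).mk' ((Con.eq _).2 (presCon_rel_d R))
    ((Con.eq _).2 (presCon_rel_b R))
  refine (Con.eq _).1 ?_
  change (presCon R).mk' v = (presCon R).mk' w
  rw [← heval v, ← heval w, (Con.ker_rel ofWord).1 h]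

theorem presCon_eq_comap {R : Set (F2 × F2)} {θ : Con (NormalForm ℕ)}
    (hrel : ∀ r ∈ R, θ (ofWord r.1) (ofWord r.2))
    (hmin : ∀ η : Con (NormalForm ℕ), (∀ r ∈ R, η (ofWord r.1) (ofWord r.2)) → θ ≤ η) :
    presCon R = θ.comap ofWord (map_mul ofWord) := by
  apply le_antisymm
  · refine Con.conGen_le.2 fun v w h => ?_
    rcases h with h | h | h
    · obtain ⟨rfl, rfl⟩ := Prod.mk.inj h
      simpa [Con.comap_rel, one_def] using θ.refl (unit false)
    · obtain ⟨rfl, rfl⟩ := Prod.mk.inj h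
      simpa [Con.comap_rel] using θ.refl (word 0 false false)
    · exact hrel _ h
  · intro v w h
    have himage := hmin ((presCon R).mapOfSurjective ofWord (ker_ofWord_le_presCon R)
      ofWord_surjective) (fun r hr => ⟨_, _, presCon_rel_of_mem hr, rfl, rfl⟩) h
    obtain ⟨v', w', h', hv, hw⟩ := himage
    exact (presCon R).trans (ker_ofWord_le_presCon R hv.symm)
      ((presCon R).trans h' (ker_ofWord_le_presCon R hw))

end Presentation

section Reversal

/-- Reading words backwards, an anti-automorphism of the monoid of normal forms. -/
def reverse : NormalForm ℕ →* (NormalForm ℕ)ᵐᵒᵖ where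
  toFun
    | unit x => .op (unit x)
    | word p x y => .op (word p y x)
  map_one' := rfl
  map_mul' a b := by
    cases a <;> cases b <;> simp [← MulOpposite.op_mul, Bool.xor_comm, add_comm]

@[simp] theorem reverse_unit (x : Bool) : reverse (unit x) = .op (unit x) := rfl

@[simp] theorem reverse_word (p : ℕ) (x y : Bool) : reverse (word p x y) = .op (word p y x) := rfl

theorem reverse_surjective : Function.Surjective reverse := by
  rintro ⟨x | ⟨p, x, y⟩⟩
  exacts [⟨unit x, rfl⟩, ⟨word p y x, rfl⟩]

/-- The mirror image of a congruence, relating the reversals of words related by it. -/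
def dualCon (θ : Con (NormalForm ℕ)) : Con (NormalForm ℕ) :=
  Con.ker (θ.mk'.op.comp reverse)

theorem dualCon_iff {θ : Con (NormalForm ℕ)} {a b : NormalForm ℕ} :
    dualCon θ a b ↔ θ (reverse a).unop (reverse b).unop :=
  MulOpposite.op_injective.eq_iff.trans (Con.eq θ)

@[simp] theorem dualCon_word {θ : Con (NormalForm ℕ)} {p q : ℕ} {x y x' y' : Bool} :
    dualCon θ (word p x y) (word q x' y') ↔ θ (word p y x) (word q y' x') := dualCon_iff

theorem dualCon_dualCon (θ : Con (NormalForm ℕ)) : dualCon (dualCon θ) = θ := by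
  ext a b
  rw [dualCon_iff, dualCon_iff]
  cases a <;> cases b <;> rfl

theorem dualCon_mono {θ η : Con (NormalForm ℕ)} (h : θ ≤ η) : dualCon θ ≤ dualCon η :=
  fun _ _ hab => dualCon_iff.2 (h (dualCon_iff.1 hab))

theorem dualCon_le_iff {θ η : Con (NormalForm ℕ)} : dualCon θ ≤ η ↔ θ ≤ dualCon η :=
  ⟨fun h => dualCon_dualCon θ ▸ dualCon_mono h, fun h => dualCon_dualCon η ▸ dualCon_mono h⟩

/-- The quotient by the mirror image of a congruence is the opposite monoid. -/
noncomputable def dualConQuotientEquiv (θ : Con (NormalForm ℕ)) :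
    (dualCon θ).Quotient ≃* θ.Quotientᵐᵒᵖ :=
  Con.quotientKerEquivOfSurjective _ <|
    (MulOpposite.op_surjective.comp (θ.mk'_surjective.comp MulOpposite.unop_surjective)).comp
      reverse_surjective

theorem idealCards_quotient_dualCon (θ : Con (NormalForm ℕ)) :
    idealCards (dualCon θ).Quotient = (idealCards θ.Quotient).map id Prod.swap :=
  (idealCards_congr (dualConQuotientEquiv θ)).trans idealCards_op

end Reversal

section LongWords

/-- The number of letters `b` in a normal form. -/
def bCount : NormalForm ℕ → ℕ
  | unit _ => 0
  | word p _ _ => p + 1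

theorem bCount_le_bCount_mul_left (a b : NormalForm ℕ) : bCount b ≤ bCount (a * b) := by
  cases a <;> cases b <;> simp only [bCount, unit_mul_unit, unit_mul_word,
    word_mul_unit, word_mul_word] <;> omega

theorem bCount_le_bCount_mul_right (a b : NormalForm ℕ) : bCount a ≤ bCount (a * b) := by
  cases a <;> cases b <;> simp only [bCount, unit_mul_unit, unit_mul_word,
    word_mul_unit, word_mul_word] <;> omega

/-- The congruence that agrees with `ρ` on words with at least `k` letters `b` and is trivial on the
other ones. -/
def longCon (k : ℕ) (ρ : Con (NormalForm ℕ)) : Con (NormalForm ℕ) :=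
  idealCon {a | k ≤ bCount a} (fun a b hb => le_trans hb (bCount_le_bCount_mul_left a b))
    (fun a ha b => le_trans ha (bCount_le_bCount_mul_right a b)) ρ

variable {t p q : ℕ} {x y x' y' : Bool} {θ ρ : Con (NormalForm ℕ)}

theorem longCon_word_iff (hp : t ≤ p) (hq : t ≤ q) :
    longCon (t + 1) ρ (word p x y) (word q x' y') ↔ ρ (word p x y) (word q x' y') :=
  idealCon_iff_of_mem (Nat.succ_le_succ hp) (Nat.succ_le_succ hq)

theorem longCon_le_iff : longCon (t + 1) ρ ≤ θ ↔ ∀ {p q : ℕ} {x y x' y' : Bool}, t ≤ p → t ≤ q →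
    ρ (word p x y) (word q x' y') → θ (word p x y) (word q x' y') := by
  refine ⟨fun h _ _ _ _ _ _ hp hq hρ => h ((longCon_word_iff hp hq).2 hρ), fun h a b hab => ?_⟩
  rcases hab with rfl | ⟨ha, hb, hρ⟩
  · exact θ.refl a
  · cases a with
    | unit x => exact absurd ha (Nat.not_succ_le_zero t)
    | word p x y =>
      cases b with
      | unit x => exact absurd hb (Nat.not_succ_le_zero t)
      | word q x' y' => exact h (Nat.le_of_succ_le_succ ha) (Nat.le_of_succ_le_succ hb) hρ

theorem dualCon_longCon (k : ℕ) (ρ : Con (NormalForm ℕ)) :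
    dualCon (longCon k ρ) = longCon k (dualCon ρ) := by
  ext a b
  rw [dualCon_iff]
  cases a <;> cases b <;> simp [longCon, idealCon_iff, bCount, dualCon_iff, and_comm]

end LongWords

section Counting

variable {θ ρ : Con (NormalForm ℕ)} {T : Type*}

theorem ncard_bCount_le (t : ℕ) : {a : NormalForm ℕ | bCount a ≤ t}.ncard = 2 + 4 * t := by
  let f : Bool ⊕ Fin t × Bool × Bool → NormalForm ℕ :=
    Sum.elim unit fun a => word a.1 a.2.1 a.2.2
  have hf : Function.Injective f := by
    rintro (x | ⟨⟨p, hp⟩, x, y⟩) (x' | ⟨⟨q, hq⟩, x', y'⟩) h <;> simp_all [f]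
  have hrange : {a : NormalForm ℕ | bCount a ≤ t} = Set.range f := by
    ext (x | ⟨p, x, y⟩)
    · simp [f, bCount]
    · simp [f, bCount, Fin.exists_iff]
  rw [hrange, Set.ncard_range_of_injective hf]
  simp [mul_comm]

theorem natCard_quotient_longCon [Finite T] {code : ℕ → Bool → Bool → T}
    (hcode : ∀ {p q x y x' y'}, ρ (word p x y) (word q x' y') ↔ code p x y = code q x' y')
    (hsurj : ∀ s c, ∃ p ≥ s, ∃ x y, code p x y = c) (t : ℕ) :
    Nat.card (longCon (t + 1) ρ).Quotient = 2 + 4 * t + Nat.card T := by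
  set I : Set (NormalForm ℕ) := {a | t + 1 ≤ bCount a}
  have hcompl : Iᶜ = {a | bCount a ≤ t} := by
    ext a
    simp [I]
  have hI : I = (fun a : ℕ × Bool × Bool => word a.1 a.2.1 a.2.2) '' {a | t ≤ a.1} := by
    ext (x | ⟨p, x, y⟩) <;> simp [I, bCount]
  have hlong : ((↑) '' I : Set (longCon (t + 1) ρ).Quotient).ncard = Nat.card T := by
    rw [hI, Set.image_image]
    refine ncard_image_eq_natCard (g := fun a => code a.1 a.2.1 a.2.2) ?_ fun c => ?_
    · rintro ⟨p, x, y⟩ hp ⟨q, x', y'⟩ hq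
      exact (Con.eq _).trans ((longCon_word_iff hp hq).trans hcode)
    · obtain ⟨p, hp, x, y, h⟩ := hsurj t c
      exact ⟨(p, x, y), hp, h⟩
  have : Nonempty T := ⟨code 0 false false⟩
  have hshort := ncard_bCount_le t
  rw [longCon, natCard_quotient_idealCon, hcompl, hshort]
  · exact congrArg _ hlong
  · rw [hcompl]
    exact Set.finite_of_ncard_pos (by omega)
  · exact Set.finite_of_ncard_pos (hlong ▸ Nat.card_pos)

theorem exists_recurrent_word (θ : Con (NormalForm ℕ)) [Finite θ.Quotient] (t : ℕ) :
    ∃ k ≥ t, ∀ q, ∃ p ≥ q, θ (word p false false) (word k false false) := by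
  obtain ⟨c, hc⟩ := Finite.exists_infinite_fiber fun p : ℕ => (word p false false : θ.Quotient)
  have hc := Set.infinite_coe_iff.1 hc
  obtain ⟨k, hk, hkt⟩ := hc.exists_gt t
  refine ⟨k, hkt.le, fun q => ?_⟩
  obtain ⟨p, hp, hpq⟩ := hc.exists_gt q
  exact ⟨p, hpq.le, (Con.eq θ).1 (hp.trans hk.symm)⟩

theorem range_word_mul (k : ℕ) : Set.range (word k false false * ·) =
    (fun a : ℕ × Bool => word a.1 false a.2) '' {a | k ≤ a.1} := by
  ext a
  constructor
  · rintro ⟨x | ⟨q, x, y⟩, rfl⟩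
    · exact ⟨(k, x), le_refl k, by simp⟩
    · exact ⟨(k + q + x.toNat, y), by simp [add_assoc], by simp⟩
  · rintro ⟨⟨p, y⟩, hp, rfl⟩
    rcases Nat.eq_or_lt_of_le hp with rfl | hlt
    · exact ⟨unit y, by simp⟩
    · obtain ⟨q, rfl⟩ := Nat.exists_eq_add_of_lt hlt
      exact ⟨word q true y, by simp⟩

theorem exists_mul_mul_eq_word {k : ℕ}
    (hk : ∀ q, ∃ p ≥ q, θ (word p false false) (word k false false)) (z : θ.Quotient) :
    ∃ a c : θ.Quotient, a * z * c = (word k false false : NormalForm ℕ) := by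
  induction z using Con.induction_on with
  | H z =>
  suffices ∃ a c : NormalForm ℕ, θ (a * z * c) (word k false false) by
    obtain ⟨a, c, h⟩ := this
    exact ⟨a, c, (Con.eq θ).2 h⟩
  cases z with
  | unit x => exact ⟨unit x, word k false false, by simpa using θ.refl _⟩
  | word q x y =>
    obtain ⟨p, hp, h⟩ := hk q
    obtain ⟨m, rfl⟩ := Nat.exists_eq_add_of_le hp
    exact ⟨unit x, word m y false, by simpa using h⟩

theorem minRightIdealCard_quotient [Finite θ.Quotient] {t : ℕ} {code : ℕ → Bool → T}
    (hcode : ∀ {p q y y'}, t ≤ p → t ≤ q →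
      (θ (word p false y) (word q false y') ↔ code p y = code q y'))
    (hsurj : ∀ s c, ∃ p ≥ s, ∃ y, code p y = c) :
    minRightIdealCard θ.Quotient = Nat.card T := by
  obtain ⟨k, hkt, hk⟩ := exists_recurrent_word θ t
  rw [minRightIdealCard_eq_of_kernel (exists_mul_mul_eq_word hk)]
  have hrange : Set.range ((word k false false : NormalForm ℕ) * · : θ.Quotient → θ.Quotient) =
      (fun a : ℕ × Bool => ((word a.1 false a.2 : NormalForm ℕ) : θ.Quotient)) ''
        {a | k ≤ a.1} := by
    have := congrArg (Set.image ((↑) : NormalForm ℕ → θ.Quotient)) (range_word_mul k)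
    rw [Set.image_image, ← Set.range_comp] at this
    rw [← this, ← θ.mk'_surjective.range_comp]
    rfl
  rw [hrange]
  refine ncard_image_eq_natCard (g := fun a => code a.1 a.2) ?_ fun c => ?_
  · rintro ⟨p, y⟩ hp ⟨q, y'⟩ hq
    exact (Con.eq θ).trans (hcode (hkt.trans hp) (hkt.trans hq))
  · obtain ⟨p, hp, y, h⟩ := hsurj k c
    exact ⟨(p, y), hp, h⟩

theorem minLeftIdealCard_quotient [Finite θ.Quotient] {t : ℕ} {code : ℕ → Bool → T}
    (hcode : ∀ {p q x x'}, t ≤ p → t ≤ q →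
      (θ (word p x false) (word q x' false) ↔ code p x = code q x'))
    (hsurj : ∀ s c, ∃ p ≥ s, ∃ x, code p x = c) :
    minLeftIdealCard θ.Quotient = Nat.card T := by
  have : Finite (dualCon θ).Quotient :=
    .of_equiv _ (MulOpposite.opEquiv.trans (dualConQuotientEquiv θ).symm.toEquiv)
  rw [← minRightIdealCard_op, ← minRightIdealCard_congr (dualConQuotientEquiv θ)]
  exact minRightIdealCard_quotient (fun hp hq => dualCon_word.trans (hcode hp hq)) hsurj

/-- Here `code` labels the classes of all long words, and `rcode` and `lcode` those of the words
starting, respectively ending, with `b`, which make up the smallest right and left ideals. -/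
theorem idealCards_quotient_longCon {V W : Type*} [Finite T] {code : ℕ → Bool → Bool → T}
    {rcode : ℕ → Bool → V} {lcode : ℕ → Bool → W}
    (hcode : ∀ {p q x y x' y'}, ρ (word p x y) (word q x' y') ↔ code p x y = code q x' y')
    (hsurj : ∀ s c, ∃ p ≥ s, ∃ x y, code p x y = c)
    (hr : ∀ {p q y y'}, code p false y = code q false y' ↔ rcode p y = rcode q y')
    (hrsurj : ∀ s c, ∃ p ≥ s, ∃ y, rcode p y = c)
    (hl : ∀ {p q x x'}, code p x false = code q x' false ↔ lcode p x = lcode q x')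
    (hlsurj : ∀ s c, ∃ p ≥ s, ∃ x, lcode p x = c) (t : ℕ) :
    idealCards (longCon (t + 1) ρ).Quotient =
      (2 + 4 * t + Nat.card T, Nat.card V, Nat.card W) := by
  have hcard := natCard_quotient_longCon hcode hsurj t
  have : Finite (longCon (t + 1) ρ).Quotient := Nat.finite_of_card_ne_zero (by omega)
  rw [idealCards, hcard,
    minRightIdealCard_quotient (fun hp hq => (longCon_word_iff hp hq).trans (hcode.trans hr))
      hrsurj,
    minLeftIdealCard_quotient (fun hp hq => (longCon_word_iff hp hq).trans (hcode.trans hl))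
      hlsurj]

end Counting

section Congruences

variable {p q : ℕ} {x y x' y' : Bool}

/-- The congruence of the action of the monoid of normal forms on `{1, d}` in which `d` exchanges
the two points and `b` is constant; it detects the first letter of a word. -/
def headCon : Con (NormalForm ℕ) :=
  Con.ker
    { toFun
        | unit x => (x ^^ ·)
        | word _ x _ => fun _ => x
      map_one' := funext Bool.false_xor
      map_mul' a b := by
        cases a <;> cases b
        case unit.unit => exact funext fun z => Bool.xor_assoc _ _ z
        all_goals rfl :
      NormalForm ℕ →* Function.End Bool }

@[simp] theorem headCon_word : headCon (word p x y) (word q x' y') ↔ x = x' :=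
  (Con.ker_rel _).trans ⟨fun h => congrFun h true, fun h => funext fun _ => h⟩

theorem natCast_toNat_xor (x y : Bool) :
    ((x ^^ y).toNat : ZMod 2) = x.toNat + y.toNat := by
  cases x <;> cases y <;> decide

theorem natCast_toNat_not (x : Bool) : ((!x).toNat : ZMod 2) = x.toNat + 1 := by
  cases x <;> decide

/-- The congruence comparing the parities of the numbers of letters `d`. -/
def parityCon : Con (NormalForm ℕ) :=
  Con.ker
    { toFun
        | unit x => .ofAdd (x.toNat : ZMod 2)
        | word p x y => .ofAdd (p + x.toNat + y.toNat : ZMod 2)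
      map_one' := by simp
      map_mul' a b := by
        cases a <;> cases b <;> simp [← ofAdd_add, natCast_toNat_xor] <;> ring :
      NormalForm ℕ →* Multiplicative (ZMod 2) }

@[simp] theorem parityCon_word : parityCon (word p x y) (word q x' y') ↔
    (p + x.toNat + y.toNat : ZMod 2) = q + x'.toNat + y'.toNat := Iff.rfl

/-- The congruence comparing the numbers of letters `b` modulo `l`, the first letters and the last
letters. -/
def modCon (l : ℕ) : Con (NormalForm ℕ) :=
  Con.ker
    { toFun
        | unit x => unit x
        | word p x y => word (p : ZMod l) x y
      map_one' := rfl
      map_mul' a b := by cases a <;> cases b <;> simp :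
      NormalForm ℕ →* NormalForm (ZMod l) }

@[simp] theorem modCon_word {l : ℕ} : modCon l (word p x y) (word q x' y') ↔
    (p : ZMod l) = q ∧ x = x' ∧ y = y' :=
  (Con.ker_rel _).trans (by simp)

end Congruences

section Generation

variable {t l p q : ℕ} {x y x' y' : Bool} {θ : Con (NormalForm ℕ)}

theorem word_shift (h : θ (word p x y) (word q x y')) (j : ℕ) (x' c : Bool) :
    θ (word (p + j) x' (y ^^ c)) (word (q + j) x' (y' ^^ c)) := by
  have hright := θ.mul h (θ.refl (unit c))
  cases j with
  | zero => simpa using θ.mul (θ.refl (unit (x' ^^ x))) hright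
  | succ j =>
    have := θ.mul (θ.refl (word j x' (!x))) hright
    simpa [add_comm, add_left_comm, ← add_assoc] using this

theorem longCon_modCon_le (h : θ (word t true false) (word (t + l) true false)) :
    longCon (t + 1) (modCon l) ≤ θ := by
  have hstep : ∀ p ≥ t, ∀ x y, θ (word p x y) (word (p + l) x y) := fun p hp x y => by
    obtain ⟨j, rfl⟩ := Nat.exists_eq_add_of_le hp
    simpa [add_right_comm] using word_shift h j x y
  have hmul : ∀ m, ∀ p ≥ t, ∀ x y, θ (word p x y) (word (p + l * m) x y) := fun m p hp x y => by
    induction m with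
    | zero => exact θ.refl _
    | succ m ih =>
      rw [mul_add_one, ← add_assoc]
      exact θ.trans ih (hstep (p + l * m) (hp.trans (Nat.le_add_right _ _)) x y)
  have hle : ∀ {p q}, t ≤ p → p ≤ q → (p : ZMod l) = q → ∀ x y,
      θ (word p x y) (word q x y) := fun {p q} hp hpq hmod x y => by
    obtain ⟨m, hm⟩ := (Nat.modEq_iff_dvd' hpq).1 ((ZMod.natCast_eq_natCast_iff _ _ _).1 hmod)
    obtain rfl : q = p + l * m := by omega
    exact hmul m p hp x y
  refine longCon_le_iff.2 fun {p q x y x' y'} hp hq hpq => ?_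
  obtain ⟨hmod, rfl, rfl⟩ := modCon_word.1 hpq
  rcases le_total p q with hpq | hqp
  · exact hle hp hpq hmod x y
  · exact θ.symm (hle hq hqp hmod.symm x y)

theorem longCon_headCon_inf_parityCon_le
    (h : θ (word t true false) (word (t + 1) true true)) :
    longCon (t + 1) (headCon ⊓ parityCon) ≤ θ := by
  have hstep : ∀ p ≥ t, ∀ x y, θ (word p x y) (word (p + 1) x !y) := fun p hp x y => by
    obtain ⟨j, rfl⟩ := Nat.exists_eq_add_of_le hp
    simpa [add_right_comm] using word_shift h j x y
  have hmod : longCon (t + 1) (modCon 2) ≤ θ :=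
    longCon_modCon_le (θ.trans h (hstep (t + 1) t.le_succ true true))
  refine longCon_le_iff.2 fun {p q x y x' y'} hp hq hpq => ?_
  obtain ⟨rfl, hparity⟩ : x = x' ∧ (p + x.toNat + y.toNat : ZMod 2) = q + x'.toNat + y'.toNat :=
    ⟨headCon_word.1 hpq.1, parityCon_word.1 hpq.2⟩
  rcases eq_or_ne y y' with rfl | hy
  · exact longCon_le_iff.1 hmod hp hq (modCon_word.2 ⟨by simpa using hparity, rfl, rfl⟩)
  · obtain rfl : y' = !y := Bool.eq_not_of_ne hy.symm
    refine θ.trans (hstep p hp x y) (longCon_le_iff.1 hmod (hp.trans p.le_succ) hq ?_)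
    refine modCon_word.2 ⟨?_, rfl, rfl⟩
    rw [natCast_toNat_not] at hparity
    push_cast
    linear_combination hparity + (CharTwo.two_eq_zero : (2 : ZMod 2) = 0)

theorem longCon_headCon_le (h : θ (word t true false) (word t true true)) :
    longCon (t + 1) headCon ≤ θ := by
  have hflip : ∀ p ≥ t, ∀ x, θ (word p x false) (word p x true) := fun p hp x => by
    obtain ⟨j, rfl⟩ := Nat.exists_eq_add_of_le hp
    simpa using word_shift h j x false
  have hmod : longCon (t + 1) (modCon 1) ≤ θ :=
    longCon_modCon_le (by simpa using θ.mul h (θ.refl (word 0 false false)))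
  refine longCon_le_iff.2 fun {p q x y x' y'} hp hq hx => ?_
  obtain rfl := headCon_word.1 hx
  refine θ.trans (longCon_le_iff.1 hmod hp hq (modCon_word.2 ⟨Subsingleton.elim _ _, rfl, rfl⟩)) ?_
  cases y <;> cases y'
  exacts [θ.refl _, hflip q hq x, θ.symm (hflip q hq x), θ.refl _]

theorem longCon_dualCon_headCon_inf_parityCon_le
    (h : θ (word t true false) (word (t + 1) false false)) :
    longCon (t + 1) (dualCon (headCon ⊓ parityCon)) ≤ θ := by
  rw [← dualCon_longCon, dualCon_le_iff]
  refine longCon_headCon_inf_parityCon_le (dualCon_word.2 ?_)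
  simpa using θ.mul (θ.mul (θ.refl (unit true)) h) (θ.refl (unit true))

theorem longCon_dualCon_headCon_le (h : θ (word t true false) (word t false false)) :
    longCon (t + 1) (dualCon headCon) ≤ θ := by
  rw [← dualCon_longCon, dualCon_le_iff]
  refine longCon_headCon_le (dualCon_word.2 ?_)
  simpa using θ.mul (θ.mul (θ.refl (unit true)) h) (θ.refl (unit true))

theorem longCon_parityCon_le (h : θ (word t true false) (word t false true)) :
    longCon (t + 1) parityCon ≤ θ := by
  have htail : longCon (t + 1) (headCon ⊓ parityCon) ≤ θ :=
    longCon_headCon_inf_parityCon_le <| by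
      have hb : θ (word t false true) (word (t + 1) false false) := by
        simpa using θ.symm (θ.mul (θ.refl (word 0 false false)) h)
      simpa using word_shift hb 0 true true
  have hhead : longCon (t + 1) (dualCon (headCon ⊓ parityCon)) ≤ θ :=
    longCon_dualCon_headCon_inf_parityCon_le <| by
      simpa using θ.mul h (θ.refl (word 0 false false))
  refine longCon_le_iff.2 fun {p q x y x' y'} hp hq hparity => ?_
  have htwo : (2 : ZMod 2) = 0 := CharTwo.two_eq_zero
  have hp' : t ≤ p + (x ^^ x').toNat := hp.trans (Nat.le_add_right _ _)
  refine θ.trans (longCon_le_iff.1 hhead hp hp' (x' := x') (y' := y) ?_)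
    (longCon_le_iff.1 htail hp' hq ?_)
  · refine dualCon_word.2 ⟨headCon_word.2 rfl, parityCon_word.2 ?_⟩
    push_cast [natCast_toNat_xor]
    linear_combination (-x'.toNat : ZMod 2) * htwo
  · refine ⟨headCon_word.2 rfl, parityCon_word.2 ?_⟩
    push_cast [natCast_toNat_xor]
    linear_combination parityCon_word.1 hparity + (x'.toNat : ZMod 2) * htwo

theorem longCon_top_le (h : θ (word t true false) (word (t + 1) false true)) :
    longCon (t + 1) ⊤ ≤ θ := by
  have hhead : ∀ {η : Con (NormalForm ℕ)}, η (word t true false) (word (t + 1) false true) →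
      longCon (t + 1) headCon ≤ η := fun {η} h => longCon_headCon_le <| by
    have hd : η (word t true true) (word (t + 1) false false) := by
      simpa using η.mul h (η.refl (unit true))
    have hb : η (word (t + 1) false true) (word (t + 1) false false) := by
      simpa [add_assoc] using η.mul (η.refl (word 0 false false)) hd
    exact η.trans h (η.trans hb (η.symm hd))
  have hlast : longCon (t + 1) (dualCon headCon) ≤ θ := by
    rw [← dualCon_longCon, dualCon_le_iff]
    refine hhead (dualCon_word.2 ?_)
    simpa using θ.mul (θ.mul (θ.refl (unit true)) h) (θ.refl (unit true))
  refine longCon_le_iff.2 fun {p q x y x' y'} hp hq _ => ?_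
  exact θ.trans (longCon_le_iff.1 (hhead h) hp hq (headCon_word.2 rfl))
    (longCon_le_iff.1 hlast hq hq (dualCon_word.2 (headCon_word.2 rfl)))

end Generation

section IdealCards

theorem idealCards_quotient_longCon_modCon (t l : ℕ) [NeZero l] :
    idealCards (longCon (t + 1) (modCon l)).Quotient =
      (4 * (t + 1 + l) - 2, 2 * l, 2 * l) := by
  rw [idealCards_quotient_longCon (T := ZMod l × Bool × Bool) (V := ZMod l × Bool)
    (W := ZMod l × Bool) (code := fun p x y => (p, x, y)) (rcode := fun p y => (p, y))
    (lcode := fun p x => (p, x))]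
  · simp
    omega
  case hcode | hr | hl => simp
  case hsurj =>
    rintro s ⟨v, x, y⟩
    obtain ⟨p, hp, rfl⟩ := exists_ge_natCast_eq l s v
    exact ⟨p, hp, x, y, rfl⟩
  case hrsurj | hlsurj =>
    rintro s ⟨v, x⟩
    obtain ⟨p, hp, rfl⟩ := exists_ge_natCast_eq l s v
    exact ⟨p, hp, x, rfl⟩

theorem idealCards_quotient_longCon_headCon_inf_parityCon (t : ℕ) :
    idealCards (longCon (t + 1) (headCon ⊓ parityCon)).Quotient = (4 * (t + 1) + 2, 2, 4) := by
  rw [idealCards_quotient_longCon (T := Bool × ZMod 2) (V := ZMod 2) (W := Bool × ZMod 2)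
    (code := fun p x y => (x, p + x.toNat + y.toNat)) (rcode := fun p y => p + y.toNat)
    (lcode := fun p x => (x, p + x.toNat))]
  · simp
    omega
  case hcode => simp [Con.inf_iff_and]
  case hr | hl => simp
  case hsurj =>
    rintro s ⟨x, v⟩
    obtain ⟨p, hp, hv⟩ := exists_ge_natCast_eq 2 s (v - x.toNat)
    exact ⟨p, hp, x, false, by simp [hv]⟩
  case hrsurj =>
    intro s v
    obtain ⟨p, hp, rfl⟩ := exists_ge_natCast_eq 2 s v
    exact ⟨p, hp, false, by simp⟩
  case hlsurj =>
    rintro s ⟨x, v⟩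
    obtain ⟨p, hp, hv⟩ := exists_ge_natCast_eq 2 s (v - x.toNat)
    exact ⟨p, hp, x, by simp [hv]⟩

theorem idealCards_quotient_longCon_headCon (t : ℕ) :
    idealCards (longCon (t + 1) headCon).Quotient = (4 * (t + 1), 1, 2) := by
  rw [idealCards_quotient_longCon (T := Bool) (V := Unit) (W := Bool)
    (code := fun _ x _ => x) (rcode := fun _ _ => ()) (lcode := fun _ x => x)]
  · simp
    omega
  case hcode | hr | hl => simp
  case hsurj => exact fun s x => ⟨s, le_rfl, x, false, rfl⟩
  case hrsurj => exact fun s _ => ⟨s, le_rfl, false, rfl⟩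
  case hlsurj => exact fun s x => ⟨s, le_rfl, x, rfl⟩

theorem idealCards_quotient_longCon_parityCon (t : ℕ) :
    idealCards (longCon (t + 1) parityCon).Quotient = (4 * (t + 1), 2, 2) := by
  rw [idealCards_quotient_longCon (T := ZMod 2) (V := ZMod 2) (W := ZMod 2)
    (code := fun p x y => p + x.toNat + y.toNat) (rcode := fun p y => p + y.toNat)
    (lcode := fun p x => p + x.toNat)]
  · simp
    omega
  case hcode | hr | hl => simp
  case hsurj =>
    intro s v
    obtain ⟨p, hp, rfl⟩ := exists_ge_natCast_eq 2 s v
    exact ⟨p, hp, false, false, by simp⟩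
  case hrsurj | hlsurj =>
    intro s v
    obtain ⟨p, hp, rfl⟩ := exists_ge_natCast_eq 2 s v
    exact ⟨p, hp, false, by simp⟩

theorem idealCards_quotient_longCon_top (t : ℕ) :
    idealCards (longCon (t + 1) ⊤).Quotient = (4 * (t + 1) - 1, 1, 1) := by
  rw [idealCards_quotient_longCon (T := Unit) (V := Unit) (W := Unit)
    (code := fun _ _ _ => ()) (rcode := fun _ _ => ()) (lcode := fun _ _ => ())]
  · simp
    omega
  case hcode => exact iff_of_true trivial rfl
  case hr | hl => simp
  case hsurj => exact fun s _ => ⟨s, le_rfl, false, false, rfl⟩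
  case hrsurj | hlsurj => exact fun s _ => ⟨s, le_rfl, false, rfl⟩

theorem idealCards_quotient_longCon_dualCon (k : ℕ) (ρ : Con (NormalForm ℕ)) :
    idealCards (longCon k (dualCon ρ)).Quotient =
      (idealCards (longCon k ρ).Quotient).map id Prod.swap := by
  rw [← dualCon_longCon, idealCards_quotient_dualCon]

end IdealCards

theorem presCon_singleton_eq_comap {t p q : ℕ} {x y x' y' : Bool} {v w : F2}
    {ρ : Con (NormalForm ℕ)} (hv : ofWord v = word p x y) (hw : ofWord w = word q x' y')
    (hp : t ≤ p) (hq : t ≤ q) (hrel : ρ (word p x y) (word q x' y'))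
    (hmin : ∀ {η : Con (NormalForm ℕ)}, η (word p x y) (word q x' y') → longCon (t + 1) ρ ≤ η) :
    presCon {(v, w)} = (longCon (t + 1) ρ).comap ofWord (map_mul ofWord) :=
  presCon_eq_comap (by simpa [hv, hw] using (longCon_word_iff hp hq).2 hrel)
    fun η h => hmin (by simpa [hv, hw] using h)

end NormalForm

namespace NormEq

open NormalForm

/-- The exponent `k` of an equation, which identifies only words with at least `k` letters `b`. -/
def index : NormEq → ℕ
  | .e00 k _ | .e01c k | .e01b k | .e10c k | .e10b k | .e11c k | .e11b k => k

/-- The congruence that an equation imposes on words with at least `index` letters `b`. -/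
def tail : NormEq → Con (NormalForm ℕ)
  | .e00 _ l => modCon l
  | .e01c _ => headCon ⊓ parityCon
  | .e01b _ => headCon
  | .e10c _ => dualCon (headCon ⊓ parityCon)
  | .e10b _ => dualCon headCon
  | .e11c _ => parityCon
  | .e11b _ => ⊤

/-- The values of `idealCards` on the monoids presented by the equations. -/
def cards : NormEq → ℕ × ℕ × ℕ
  | .e00 k l => (4 * (k + l) - 2, 2 * l, 2 * l)
  | .e01c k => (4 * k + 2, 2, 4)
  | .e01b k => (4 * k, 1, 2)
  | .e10c k => (4 * k + 2, 4, 2)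
  | .e10b k => (4 * k, 2, 1)
  | .e11c k => (4 * k, 2, 2)
  | .e11b k => (4 * k - 1, 1, 1)

theorem valid.exists_index_eq {e : NormEq} (he : e.valid) : ∃ t, e.index = t + 1 := by
  refine Nat.exists_eq_succ_of_ne_zero ?_
  cases e <;> simp only [valid, index] at he ⊢ <;> omega

theorem valid.presCon_eq {e : NormEq} (he : e.valid) :
    presCon {e.pair} = (longCon e.index e.tail).comap ofWord (map_mul ofWord) := by
  obtain ⟨t, ht⟩ := he.exists_index_eq
  rw [ht]
  cases e <;> obtain rfl := ht
  case e00 l =>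
    refine presCon_singleton_eq_comap (ofWord_db_pow t) ?_ le_rfl
      (Nat.le_add_right t l) (by simp [tail]) longCon_modCon_le
    rw [add_right_comm, ofWord_db_pow]
  case e01c =>
    have hparity : parityCon (word t true false) (word (t + 1) true true) := parityCon_word.2 <| by
      simp only [Bool.toNat_true, Bool.toNat_false]
      push_cast
      linear_combination -(CharTwo.two_eq_zero : (2 : ZMod 2) = 0)
    exact presCon_singleton_eq_comap (ofWord_db_pow t) (by simp [ofWord_db_pow]) le_rfl
      t.le_succ ⟨headCon_word.2 rfl, hparity⟩ longCon_headCon_inf_parityCon_le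
  case e01b =>
    exact presCon_singleton_eq_comap (ofWord_db_pow t) (by rw [map_mul, ofWord_db_pow]; simp)
      le_rfl le_rfl (by simp [tail]) longCon_headCon_le
  case e10c =>
    exact presCon_singleton_eq_comap (ofWord_db_pow t) (ofWord_bd_pow_mul_b (t + 1)) le_rfl
      t.le_succ (by simp [tail, Con.inf_iff_and]) longCon_dualCon_headCon_inf_parityCon_le
  case e10b =>
    exact presCon_singleton_eq_comap (ofWord_db_pow t) (ofWord_bd_pow_mul_b t) le_rfl le_rfl
      (by simp [tail]) longCon_dualCon_headCon_le
  case e11c =>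
    exact presCon_singleton_eq_comap (ofWord_db_pow t) (ofWord_bd_pow t) le_rfl le_rfl
      (by simp [tail]) longCon_parityCon_le
  case e11b =>
    exact presCon_singleton_eq_comap (ofWord_db_pow t) (ofWord_bd_pow (t + 1)) le_rfl t.le_succ
      trivial longCon_top_le

theorem valid.idealCards_presMon {e : NormEq} (he : e.valid) :
    idealCards (PresMon {e.pair}) = e.cards := by
  have hequiv : idealCards (PresMon {e.pair}) = idealCards (longCon e.index e.tail).Quotient :=
    idealCards_congr <| (Con.congr (.refl F2) he.presCon_eq).trans <|
      Con.comapQuotientEquivOfSurj _ _ ofWord_surjective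
  rw [hequiv]
  obtain ⟨t, ht⟩ := he.exists_index_eq
  cases e <;> obtain rfl := ht
  case e00 l =>
    have : NeZero l := ⟨(Nat.one_le_iff_ne_zero).1 he.2⟩
    exact idealCards_quotient_longCon_modCon t l
  case e01c => exact idealCards_quotient_longCon_headCon_inf_parityCon t
  case e01b => exact idealCards_quotient_longCon_headCon t
  case e10c =>
    exact (idealCards_quotient_longCon_dualCon _ _).trans
      (congrArg _ (idealCards_quotient_longCon_headCon_inf_parityCon t))
  case e10b =>
    exact (idealCards_quotient_longCon_dualCon _ _).trans
      (congrArg _ (idealCards_quotient_longCon_headCon t))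
  case e11c => exact idealCards_quotient_longCon_parityCon t
  case e11b => exact idealCards_quotient_longCon_top t

theorem valid.eq_of_cards_eq {e e' : NormEq} (he : e.valid) (he' : e'.valid)
    (h : e.cards = e'.cards) : e = e' := by
  cases e <;> cases e' <;>
    simp only [valid, cards, Prod.mk.injEq, reduceCtorEq, e00.injEq, e01c.injEq, e01b.injEq,
      e10c.injEq, e10b.injEq, e11c.injEq, e11b.injEq] at he he' h ⊢ <;> omega

end NormEq

/-- Classification of strict 2-PIMs: two presented monoids
`⟨d, b ∣ d² = 1, b² = b, eq⟩` and `⟨d, b ∣ d² = 1, b² = b, eq'⟩` with `eq, eq' ∈ 𝔼`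
are isomorphic if and only if the equations belong to the same family
with the same parameters. -/
theorem stmt_19 (e e' : NormEq) (he : e.valid) (he' : e'.valid) :
    Nonempty (PresMon {e.pair} ≃* PresMon {e'.pair}) ↔ e = e' := by
  constructor
  · rintro ⟨f⟩
    refine he.eq_of_cards_eq he' ?_
    rw [← he.idealCards_presMon, ← he'.idealCards_presMon, idealCards_congr f]
  · rintro rfl
    exact ⟨MulEquiv.refl _⟩
end
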